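/- arXiv:0710.1178 — 2 statements merged into one kernel-verified Lean document; each statement's English description precedes it below -/
import Mathlib

section
/- Let $(A, \mathfrak{m})$ be a Cohen-Macaulay local ring of dimension $d > 0$ with infinite residue field, $I$ an $\mathfrak{m}$-primary ideal, $Q$ a minimal reduction of $I$, and suppose $e_1(I) = e_0(I) - \ell_A(A/I) + 1$ and $\ell_A(I^2/QI) = d$. Then $\ell_A(A/I^{n+1}) = e_0\binom{n+d}{d} - e_1\binom{n+d-1}{d-1}$ for all $n \geq 1$, and $e_i(I) = 0$ for all $2 \leq i \leq d$. -/
open IsLocalRing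

/-- A Noetherian local ring is Cohen–Macaulay of dimension `d` iff its Krull dimension
is `d` and there is a regular sequence of length `d` in the maximal ideal. -/
def IsCohenMacaulayLocal (A : Type*) [CommRing A] [IsLocalRing A] (d : ℕ) : Prop :=
  ringKrullDim A = d ∧
    ∃ rs : List A, rs.length = d ∧ (∀ x ∈ rs, x ∈ maximalIdeal A) ∧
      RingTheory.Sequence.IsRegular A rs

/-- `I` is primary to the maximal ideal (i.e. `𝔪`-primary). -/
def IsPrimaryToMax (A : Type*) [CommRing A] [IsLocalRing A] (I : Ideal A) : Prop :=
  I ≤ maximalIdeal A ∧ maximalIdeal A ≤ I.radical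

/-- The length of a module, as the Krull dimension of its submodule lattice. -/
noncomputable def moduleLength (A M : Type*) [CommRing A] [AddCommGroup M]
    [Module A M] : WithBot ℕ∞ :=
  Order.krullDim (Submodule A M)

/-!
In a Cohen-Macaulay ring the reduction `Q` is generated by a regular sequence, so `gr_Q(A)` is a
polynomial ring over `A / Q`. Comparing lengths, `e₁ = e₀ - ℓ(A/I) + 1` says that the Hilbert
function of the Sally module `S = ⨁ I ^ (n + 1) / Q ^ n I` grows like `n ^ (d - 1) / (d - 1)!`.
An element outside `Q ^ k K`, for `Q ≤ K`, generates modulo the `Q ^ n K` something that grows at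
least as fast, so `S` has no room for two such pieces in independent position. Choosing `K`
maximal such that a suitable element of `S` survives modulo `⨁ Q ^ n K`, this rigidity embeds `S`,
up to a shift by at most one, into `⨁ Q ^ n K' / Q ^ n K` for some `K ⋖ K'`, whose Hilbert function
is exactly `n ↦ (n + d - 1).choose (d - 1)`. The condition `ℓ(I² / Q I) = d` makes the embedding
onto in degree one, hence in all positive degrees, and the Hilbert function of `I` is determined.
-/

open RingTheory.Sequence

section RegularSequences

variable {A : Type*} [CommRing A] {M : Type*} [AddCommGroup M] [Module A M]

theorem isSMulRegular_quotient_of_sub_mul_mem {J : Ideal A} {a b u : A} (h : b - u * a ∈ J)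
    (hb : IsSMulRegular (M ⧸ (J • ⊤ : Submodule A M)) b) :
    IsSMulRegular (M ⧸ (J • ⊤ : Submodule A M)) a := by
  rw [isSMulRegular_quotient_iff_mem_of_smul_mem] at hb ⊢
  intro y hy
  refine hb y ?_
  rw [← sub_add_cancel b (u * a), add_smul, mul_smul]
  exact add_mem (Submodule.smul_mem_smul h trivial) (Submodule.smul_mem _ u hy)

theorem exists_perm_cons_sub_mul_mem_ofList [IsLocalRing A] {as : List A} {b : A}
    (hb : b ∈ Ideal.ofList as) (hbm : b ∉ maximalIdeal A * Ideal.ofList as) :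
    ∃ (u : Aˣ) (a : A) (as' : List A), as.Perm (a :: as') ∧ b - u * a ∈ Ideal.ofList as' := by
  induction as generalizing b with
  | nil =>
    rw [Ideal.ofList_nil] at hb
    exact absurd ((Submodule.mem_bot A).mp hb ▸ zero_mem _) hbm
  | cons a as ih =>
    rw [Ideal.ofList_cons] at hb hbm
    obtain ⟨ra, hra, c, hc, rfl⟩ := Submodule.mem_sup.mp hb
    obtain ⟨r, rfl⟩ := Ideal.mem_span_singleton.mp hra
    by_cases hr : IsUnit r
    · obtain ⟨u, rfl⟩ := hr
      exact ⟨u, a, as, .refl _, by simpa [mul_comm a] using hc⟩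
    have hram : a * r ∈ maximalIdeal A * (Ideal.span {a} ⊔ Ideal.ofList as) :=
      mul_comm a r ▸ Ideal.mul_mem_mul ((mem_maximalIdeal r).mpr hr)
        (Ideal.mem_sup_left (Ideal.mem_span_singleton_self a))
    obtain ⟨u, a', as', hperm, hmem⟩ := ih hc fun hcm =>
      hbm (add_mem hram (Ideal.mul_mono_right le_sup_right hcm))
    refine ⟨u, a', a :: as', (hperm.cons a).trans (.swap a' a as'), ?_⟩
    rw [Ideal.ofList_cons, add_sub_assoc]
    exact add_mem (Ideal.mem_sup_left hra) (Ideal.mem_sup_right hmem)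

theorem ofList_sup_annihilator_le_of_sub_mul_mem {as as' : List A} {a b : A} {u : Aˣ}
    (hperm : as.Perm (a :: as')) (hba : b - u * a ∈ Ideal.ofList as') :
    Ideal.ofList as ⊔ Module.annihilator A M ≤
      Ideal.ofList as' ⊔ Module.annihilator A (QuotSMulTop b M) := by
  have hann : Module.annihilator A M ≤ Module.annihilator A (QuotSMulTop b M) :=
    LinearMap.annihilator_le_of_surjective (Submodule.mkQ _) (Submodule.mkQ_surjective _)
  have hb : b ∈ Module.annihilator A (QuotSMulTop b M) :=
    QuotSMulTop.mem_annihilator M b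
  have ha : a ∈ Ideal.ofList as' ⊔ Module.annihilator A (QuotSMulTop b M) := by
    rw [← Ideal.unit_mul_mem_iff_mem _ u.isUnit, ← sub_sub_cancel b (u * a)]
    exact sub_mem (Ideal.mem_sup_right hb) (Ideal.mem_sup_left hba)
  refine sup_le (Ideal.span_le.mpr fun c hc => ?_) (le_sup_of_le_right hann)
  obtain rfl | hc := List.mem_cons.mp (hperm.mem_iff.mp hc)
  · exact ha
  · exact Ideal.mem_sup_left (Ideal.subset_span hc)

variable [IsLocalRing A] [IsNoetherianRing A] [Module.Finite A M]

theorem exists_isSMulRegular_notMem_maximalIdeal_mul [Nontrivial M] {Q : Ideal A} {x : A} {k : ℕ}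
    (hQ : maximalIdeal A ^ k ≤ Q ⊔ Module.annihilator A M) (hx : x ∈ maximalIdeal A)
    (hxM : IsSMulRegular M x) :
    ∃ b ∈ Q, b ∉ maximalIdeal A * Q ∧ IsSMulRegular M b := by
  have not_le_assoc : ∀ p ∈ associatedPrimes A M, ¬ Q ≤ p := by
    intro p hp hQp
    have hann : Module.annihilator A M ≤ p :=
      Submodule.annihilator_top (R := A) (M := M) ▸ IsAssociatedPrime.annihilator_le hp
    have hpow : x ^ k ∈ p := sup_le hQp hann (hQ (Ideal.pow_mem_pow hx k))
    have hmem : x ∈ ⋃ p ∈ associatedPrimes A M, (p : Set A) :=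
      Set.mem_biUnion hp ((IsAssociatedPrime.isPrime hp).mem_of_pow_mem k hpow)
    rw [biUnion_associatedPrimes_eq_compl_regular] at hmem
    exact hmem hxM
  by_contra! hreg
  have hcover : (Q : Set A) ⊆
      ⋃ p ∈ insert (maximalIdeal A * Q) (associatedPrimes A M), (p : Set A) := by
    intro b hb
    rw [Set.biUnion_insert, biUnion_associatedPrimes_eq_compl_regular]
    exact or_iff_not_imp_left.mpr (hreg b hb)
  obtain ⟨p, rfl | hp, hQp⟩ := (Ideal.subset_union_prime_finite
    ((associatedPrimes.finite A M).insert _) (f := id) (maximalIdeal A * Q) (maximalIdeal A * Q)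
    fun p hp hne _ => IsAssociatedPrime.isPrime (hp.resolve_left hne)).mp hcover
  · have hbot : Q = ⊥ := Submodule.eq_bot_of_le_smul_of_le_jacobson_bot _ _
      (IsNoetherian.noetherian Q) hQp (maximalIdeal_le_jacobson ⊥)
    obtain ⟨p, hp⟩ := associatedPrimes.nonempty A M
    exact not_le_assoc p hp (hbot ▸ bot_le)
  · exact not_le_assoc p hp hQp

theorem isWeaklyRegular_cons_iff_append_singleton {b : A} {as : List A}
    (hb : b ∈ maximalIdeal A) (has : ∀ a ∈ as, a ∈ maximalIdeal A) :
    IsWeaklyRegular M (b :: as) ↔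
      IsWeaklyRegular M as ∧ IsSMulRegular (M ⧸ (Ideal.ofList as • ⊤ : Submodule A M)) b := by
  have hperm := List.perm_append_singleton b as
  have hmem : ∀ a ∈ b :: as, a ∈ maximalIdeal A := List.forall_mem_cons.mpr ⟨hb, has⟩
  rw [← isWeaklyRegular_singleton_iff, ← isWeaklyRegular_append_iff]
  exact ⟨fun h => isWeaklyRegular_of_perm_of_subset_maximalIdeal h hperm.symm hmem,
    fun h => isWeaklyRegular_of_perm_of_subset_maximalIdeal h hperm
      fun a ha => hmem a (hperm.mem_iff.mp ha)⟩

theorem isWeaklyRegular_of_maximalIdeal_pow_le {xs as : List A} {k : ℕ}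
    (hxs : IsRegular M xs) (hxm : ∀ x ∈ xs, x ∈ maximalIdeal A)
    (hlen : as.length = xs.length) (ham : ∀ a ∈ as, a ∈ maximalIdeal A)
    (hk : maximalIdeal A ^ k ≤ Ideal.ofList as ⊔ Module.annihilator A M) :
    IsWeaklyRegular M as := by
  induction xs using List.reverseRecOn generalizing M as with
  | nil => rw [List.length_eq_zero_iff.mp hlen]; exact .nil A M
  | append_singleton xs x ih =>
    have hxm' : ∀ y ∈ xs, y ∈ maximalIdeal A := fun y hy => hxm y (List.mem_append_left _ hy)
    obtain ⟨hxs', hx⟩ := (isWeaklyRegular_append_iff M xs [x]).mp hxs.toIsWeaklyRegular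
    have := hxs.nontrivial
    have := ((isRegular_iff_isWeaklyRegular_of_subset_maximalIdeal hxm').mpr
      hxs').quot_ofList_smul_nontrivial ⊤
    obtain ⟨b, hb, hbm, hbreg⟩ := exists_isSMulRegular_notMem_maximalIdeal_mul
      (hk.trans (sup_le_sup_left (LinearMap.annihilator_le_of_surjective _
        (Ideal.ofList xs • ⊤ : Submodule A M).mkQ_surjective) _))
      (hxm x (by simp)) ((isWeaklyRegular_singleton_iff _ x).mp hx)
    have hbmax : b ∈ maximalIdeal A := Ideal.span_le.mpr ham hb
    obtain ⟨hbM, hbxs⟩ := (isWeaklyRegular_cons_iff M b xs).mp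
      ((isWeaklyRegular_cons_iff_append_singleton hbmax hxm').mpr ⟨hxs', hbreg⟩)
    obtain ⟨u, a, as', hperm, hba⟩ := exists_perm_cons_sub_mul_mem_ofList hb hbm
    have ham' : ∀ y ∈ a :: as', y ∈ maximalIdeal A := fun y hy => ham y (hperm.mem_iff.mpr hy)
    have ham_tail := (List.forall_mem_cons.mp ham').2
    have := nontrivial_quotSMulTop_of_mem_maximalIdeal (L := M) hbmax
    have hbas : IsWeaklyRegular (QuotSMulTop b M) as' := by
      refine ih ((isRegular_iff_isWeaklyRegular_of_subset_maximalIdeal hxm').mpr hbxs) hxm' ?_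
        ham_tail (hk.trans ?_)
      · simpa [hperm.length_eq] using hlen
      · exact ofList_sup_annihilator_le_of_sub_mul_mem hperm hba
    obtain ⟨has', hbas'⟩ := (isWeaklyRegular_cons_iff_append_singleton hbmax ham_tail).mp
      (.cons hbM hbas)
    have haas : IsWeaklyRegular M (a :: as') :=
      (isWeaklyRegular_cons_iff_append_singleton (ham' a (by simp)) ham_tail).mpr
        ⟨has', isSMulRegular_quotient_of_sub_mul_mem hba hbas'⟩
    exact isWeaklyRegular_of_perm_of_subset_maximalIdeal haas hperm.symm ham'

end RegularSequences

section MinimalReductions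

variable {A : Type*} [CommRing A]

theorem ofList_ofFn {d : ℕ} (a : Fin d → A) :
    Ideal.ofList (List.ofFn a) = Ideal.span (Set.range a) := by
  simp only [Ideal.ofList, List.mem_ofFn, Set.range]

variable [IsLocalRing A]

theorem IsPrimaryToMax.of_reduction {I Q : Ideal A} (hI : IsPrimaryToMax A I) (hQI : Q ≤ I) {r : ℕ}
    (hred : I ^ (r + 1) = Q * I ^ r) : IsPrimaryToMax A Q := by
  refine ⟨hQI.trans hI.1, hI.2.trans ?_⟩
  rw [← Ideal.radical_pow I r.succ_ne_zero, hred]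
  exact Ideal.radical_mono Ideal.mul_le_left

theorem isWeaklyRegular_ofFn_of_isCohenMacaulayLocal [IsNoetherianRing A] {d : ℕ}
    (hA : IsCohenMacaulayLocal A d) {a : Fin d → A}
    (ha : IsPrimaryToMax A (Ideal.span (Set.range a))) : IsWeaklyRegular A (List.ofFn a) := by
  obtain ⟨-, xs, hlen, hxm, hxs⟩ := hA
  rw [← ofList_ofFn] at ha
  obtain ⟨k, hk⟩ := Ideal.exists_pow_le_of_le_radical_of_fg ha.2 (IsNoetherian.noetherian _)
  exact isWeaklyRegular_of_maximalIdeal_pow_le hxs hxm (by rw [List.length_ofFn, hlen])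
    (fun x hx => ha.1 (Ideal.subset_span hx)) (hk.trans le_sup_left)

end MinimalReductions

section QuasiRegularity

variable {A : Type*} [CommRing A] {J K : Ideal A} {x : A}

theorem isWeaklyRegular_append_singleton_iff {l : List A} :
    IsWeaklyRegular A (l ++ [x]) ↔
      IsWeaklyRegular A l ∧ IsSMulRegular (A ⧸ Ideal.ofList l) x := by
  rw [isWeaklyRegular_append_iff, isWeaklyRegular_singleton_iff, smul_eq_mul, Ideal.mul_top]

theorem ofList_append_singleton (l : List A) (x : A) :
    Ideal.ofList (l ++ [x]) = Ideal.ofList l ⊔ Ideal.span {x} := by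
  rw [Ideal.ofList_append, Ideal.ofList_singleton]

theorem sup_span_singleton_pow_succ_mul (J : Ideal A) (x : A) (n : ℕ) (U : Ideal A) :
    (J ⊔ Ideal.span {x}) ^ (n + 1) * U =
      J ^ (n + 1) * U ⊔ Ideal.span {x} * ((J ⊔ Ideal.span {x}) ^ n * U) := by
  have hJ : J ≤ J ⊔ Ideal.span {x} := le_sup_left
  have hx : Ideal.span {x} ≤ J ⊔ Ideal.span {x} := le_sup_right
  refine le_antisymm ?_ (sup_le (Ideal.mul_mono_left (Ideal.pow_right_mono hJ _)) ?_)
  · induction n with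
    | zero => simp [Ideal.sup_mul]
    | succ n ih =>
      rw [pow_succ' _ (n + 1), mul_assoc, Ideal.sup_mul]
      refine sup_le ((Ideal.mul_mono_right ih).trans ?_) le_sup_right
      rw [Ideal.mul_sup, ← mul_assoc J, ← pow_succ', mul_left_comm J, pow_succ' _ n,
        mul_assoc _ _ U]
      exact sup_le_sup_left (Ideal.mul_mono_right (Ideal.mul_mono_left hJ)) _
  · rw [pow_succ', mul_assoc]
    exact Ideal.mul_mono_left hx

theorem mem_sup_span_singleton_mul_iff {U V : Ideal A} {w : A} :
    w ∈ U ⊔ Ideal.span {x} * V ↔ ∃ u ∈ U, ∃ v ∈ V, u + x * v = w := by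
  simp only [Submodule.mem_sup, Ideal.mem_span_singleton_mul, exists_exists_and_eq_and]

theorem isSMulRegular_quotient_pow
    (h : ∀ n, ∀ w ∈ J ^ n, x * w ∈ J ^ n * J → w ∈ J ^ n * J) (n : ℕ) :
    IsSMulRegular (A ⧸ J ^ n) x := by
  rw [isSMulRegular_quotient_iff_mem_of_smul_mem]
  induction n with
  | zero => simp
  | succ n ih =>
    intro w hw
    rw [pow_succ] at hw ⊢
    exact h n w (ih w (Ideal.mul_le_left hw)) hw

theorem mem_sup_span_singleton_pow_mul_of_mul_mem {y : A} (hJK : J ⊔ Ideal.span {y} ≤ K)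
    (hy : ∀ n, IsSMulRegular (A ⧸ J ^ n) y) (hx : IsSMulRegular (A ⧸ K) x)
    (hJ : ∀ n, ∀ w ∈ J ^ n, x * w ∈ J ^ n * K → w ∈ J ^ n * K) (n : ℕ) :
    ∀ w ∈ (J ⊔ Ideal.span {y}) ^ n, x * w ∈ (J ⊔ Ideal.span {y}) ^ n * K →
      w ∈ (J ⊔ Ideal.span {y}) ^ n * K := by
  induction n with
  | zero =>
    intro w _ hxw
    simp only [pow_zero, one_mul] at hxw ⊢
    exact mem_of_isSMulRegular_quotient_of_smul_mem hx hxw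
  | succ n ih =>
    intro w hw hxw
    rw [← Ideal.mul_top (_ ^ (n + 1)), sup_span_singleton_pow_succ_mul, Ideal.mul_top,
      Ideal.mul_top] at hw
    rw [sup_span_singleton_pow_succ_mul] at hxw ⊢
    obtain ⟨w₁, hw₁, w₂, hw₂, rfl⟩ := mem_sup_span_singleton_mul_iff.mp hw
    obtain ⟨α, hα, β, hβ, h⟩ := mem_sup_span_singleton_mul_iff.mp hxw
    have hdiff : x * w₂ - β ∈ J ^ (n + 1) := by
      refine mem_of_isSMulRegular_quotient_of_smul_mem (hy (n + 1)) ?_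
      have : y * (x * w₂ - β) = α - x * w₁ := by linear_combination -h
      rw [smul_eq_mul, this]
      exact sub_mem (Ideal.mul_le_left hα) (Ideal.mul_mem_left _ _ hw₁)
    have hw₂K : w₂ ∈ (J ⊔ Ideal.span {y}) ^ n * K := by
      refine ih w₂ hw₂ ?_
      rw [← sub_add_cancel (x * w₂) β]
      refine add_mem ?_ hβ
      rw [pow_succ] at hdiff
      exact Ideal.mul_mono (Ideal.pow_right_mono le_sup_left _) (le_sup_left.trans hJK) hdiff
    have hw₁K : w₁ ∈ J ^ (n + 1) * K := by
      refine hJ _ _ hw₁ ?_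
      have : x * w₁ = α - (x * w₂ - β) * y := by linear_combination -h
      rw [this]
      exact sub_mem hα (Ideal.mul_mem_mul hdiff
        (hJK (Ideal.mem_sup_right (Ideal.mem_span_singleton_self y))))
    exact mem_sup_span_singleton_mul_iff.mpr ⟨w₁, hw₁K, w₂, hw₂K, rfl⟩

theorem mem_ofList_pow_mul_of_mul_mem {l : List A} (hl : IsWeaklyRegular A l)
    (hK : Ideal.ofList l ≤ K) (hx : IsSMulRegular (A ⧸ K) x) (n : ℕ) :
    ∀ w ∈ Ideal.ofList l ^ n, x * w ∈ Ideal.ofList l ^ n * K → w ∈ Ideal.ofList l ^ n * K := by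
  induction l using List.reverseRecOn generalizing K x n with
  | nil =>
    intro w hw hxw
    cases n with
    | zero =>
      simp only [pow_zero, one_mul] at hxw ⊢
      exact mem_of_isSMulRegular_quotient_of_smul_mem hx hxw
    | succ n =>
      have hw0 : w = 0 := by simpa [Ideal.ofList_nil, pow_succ] using hw
      exact hw0 ▸ zero_mem _
  | append_singleton l y ih =>
    obtain ⟨hl, hy⟩ := isWeaklyRegular_append_singleton_iff.mp hl
    rw [ofList_append_singleton] at hK ⊢
    exact mem_sup_span_singleton_pow_mul_of_mul_mem hK
      (isSMulRegular_quotient_pow (ih hl le_rfl hy)) hx (ih hl (le_sup_left.trans hK) hx) n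

theorem isSMulRegular_quotient_ofList_pow {l : List A} (h : IsWeaklyRegular A (l ++ [x])) (n : ℕ) :
    IsSMulRegular (A ⧸ Ideal.ofList l ^ n) x :=
  have ⟨hl, hx⟩ := isWeaklyRegular_append_singleton_iff.mp h
  isSMulRegular_quotient_pow (mem_ofList_pow_mul_of_mul_mem hl le_rfl hx) n

theorem mem_pow_mul_of_mul_mem_pow_succ_mul (hx : ∀ n, IsSMulRegular (A ⧸ J ^ n) x)
    (hK : J ≤ K) {n : ℕ} {w : A}
    (hw : x * w ∈ (J ⊔ Ideal.span {x}) ^ (n + 1) * K) : w ∈ (J ⊔ Ideal.span {x}) ^ n * K := by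
  rw [sup_span_singleton_pow_succ_mul] at hw
  obtain ⟨α, hα, β, hβ, hw⟩ := mem_sup_span_singleton_mul_iff.mp hw
  have hdiff : w - β ∈ J ^ (n + 1) := by
    refine mem_of_isSMulRegular_quotient_of_smul_mem (hx (n + 1)) ?_
    have : x * (w - β) = α := by linear_combination -hw
    rw [smul_eq_mul, this]
    exact Ideal.mul_le_left hα
  rw [← sub_add_cancel w β]
  refine add_mem ?_ hβ
  rw [pow_succ] at hdiff
  exact Ideal.mul_mono (Ideal.pow_right_mono le_sup_left n) hK hdiff

theorem mem_pow_succ_mul_of_mem_sup (hx : ∀ n, IsSMulRegular (A ⧸ J ^ n) x)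
    (hxK : x ∈ K) {n : ℕ} {w : A} (hw : w ∈ J ^ (n + 1))
    (hwK : w ∈ (J ⊔ Ideal.span {x}) ^ (n + 1) * K ⊔
      Ideal.span {x} * (J ⊔ Ideal.span {x}) ^ n) : w ∈ J ^ (n + 1) * K := by
  rw [sup_span_singleton_pow_succ_mul, sup_assoc, ← Ideal.mul_sup] at hwK
  obtain ⟨α, hα, β, -, rfl⟩ := mem_sup_span_singleton_mul_iff.mp hwK
  have hβ : β ∈ J ^ (n + 1) := by
    refine mem_of_isSMulRegular_quotient_of_smul_mem (hx (n + 1)) ?_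
    rw [smul_eq_mul, ← add_sub_cancel_left α (x * β)]
    exact sub_mem hw (Ideal.mul_le_left hα)
  rw [mul_comm x]
  exact add_mem hα (Ideal.mul_mem_mul hβ hxK)

end QuasiRegularity

section RelativeLength

variable {R M N : Type*} [CommRing R] [AddCommGroup M] [Module R M] [AddCommGroup N] [Module R N]

/-- The length of `V ⧸ (U ⊓ V)`, for arbitrary submodules `U` and `V`. -/
noncomputable def relLength (U V : Submodule R M) : ℕ∞ :=
  Module.length R (V ⧸ U.comap V.subtype)

theorem relLength_eq_length_map_mkQ (U V : Submodule R M) :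
    relLength U V = Module.length R (V.map U.mkQ) := by
  let f := U.mkQ.comp V.subtype
  have hker : LinearMap.ker f = U.comap V.subtype := by
    rw [LinearMap.ker_comp, Submodule.ker_mkQ]
  have hrange : LinearMap.range f = V.map U.mkQ := by
    rw [LinearMap.range_comp, Submodule.range_subtype]
  rw [relLength, ← hker, ← hrange]
  exact f.quotKerEquivRange.length_eq

theorem relLength_eq_zero_iff {U V : Submodule R M} : relLength U V = 0 ↔ V ≤ U := by
  rw [relLength, Module.length_eq_zero_iff, Submodule.Quotient.subsingleton_iff,
    Submodule.comap_subtype_eq_top]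

theorem one_le_relLength_iff {U V : Submodule R M} : 1 ≤ relLength U V ↔ ¬ V ≤ U := by
  rw [Order.one_le_iff_pos, pos_iff_ne_zero, ne_eq, relLength_eq_zero_iff]

theorem relLength_anti_left {U U' V : Submodule R M} (h : V ⊓ U ≤ U') :
    relLength U' V ≤ relLength U V :=
  Module.length_le_of_surjective (Submodule.factor fun v hv => h ⟨v.2, hv⟩)
    (Submodule.factor_surjective _)

theorem relLength_mono_right (U : Submodule R M) {V V' : Submodule R M} (h : V ≤ V') :
    relLength U V ≤ relLength U V' := by
  rw [relLength_eq_length_map_mkQ, relLength_eq_length_map_mkQ]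
  exact Module.length_le_of_injective _ (Submodule.inclusion_injective (Submodule.map_mono h))

theorem relLength_sup_right (U V : Submodule R M) : relLength U (U ⊔ V) = relLength U V := by
  rw [relLength_eq_length_map_mkQ, relLength_eq_length_map_mkQ, Submodule.map_sup,
    Submodule.mkQ_map_self, bot_sup_eq]

theorem relLength_map (f : M →ₗ[R] N) (U : Submodule R N) (V : Submodule R M) :
    relLength U (V.map f) = relLength (U.comap f) V := by
  let g := U.mkQ.comp (f.comp V.subtype)
  have hker : LinearMap.ker g = (U.comap f).comap V.subtype := by
    rw [LinearMap.ker_comp, Submodule.ker_mkQ, Submodule.comap_comp]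
  have hrange : LinearMap.range g = (V.map f).map U.mkQ := by
    rw [LinearMap.range_comp, LinearMap.range_comp, Submodule.range_subtype]
  rw [relLength_eq_length_map_mkQ, relLength, ← hker, ← hrange]
  exact g.quotKerEquivRange.length_eq.symm

theorem relLength_le_of_comap_le (f : M →ₗ[R] N) {U V : Submodule R M} {U' V' : Submodule R N}
    (hV : V ≤ V'.comap f) (hU : V ⊓ U'.comap f ≤ U) : relLength U V ≤ relLength U' V' :=
  calc relLength U V ≤ relLength (U'.comap f) V := relLength_anti_left hU
    _ = relLength U' (V.map f) := (relLength_map f U' V).symm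
    _ ≤ relLength U' V' := relLength_mono_right U' (Submodule.map_le_iff_le_comap.mpr hV)

theorem relLength_eq_add {U P : Submodule R M} (V : Submodule R M) (h : U ≤ P) :
    relLength U V = relLength U (V ⊓ P) + relLength P V := by
  let f : (↥(V ⊓ P) ⧸ U.comap (V ⊓ P).subtype) →ₗ[R] V ⧸ U.comap V.subtype :=
    Submodule.mapQ _ _ (Submodule.inclusion inf_le_left) le_rfl
  let g : (V ⧸ U.comap V.subtype) →ₗ[R] V ⧸ P.comap V.subtype :=
    Submodule.factor (Submodule.comap_mono h)
  refine Module.length_eq_add_of_exact f g ?_ (Submodule.factor_surjective _) ?_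
  · exact LinearMap.ker_eq_bot.mp ((Submodule.ker_mapQ _ _ _ _).trans (Submodule.mkQ_map_self _))
  · rw [LinearMap.exact_iff]
    refine (Submodule.ker_mapQ _ _ _ _).trans (.trans ?_ (Submodule.range_mapQ _ _ _ _).symm)
    rw [Submodule.comap_id, Submodule.range_inclusion, Submodule.comap_inf,
      Submodule.comap_subtype_self, top_inf_eq]

theorem relLength_add {U V W : Submodule R M} (hUV : U ≤ V) (hVW : V ≤ W) :
    relLength U W = relLength U V + relLength V W := by
  rw [relLength_eq_add W hUV, inf_eq_right.mpr hVW]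

theorem relLength_top (U : Submodule R M) : relLength U ⊤ = Module.length R (M ⧸ U) := by
  rw [relLength_eq_length_map_mkQ, Submodule.map_top, Submodule.range_mkQ, Module.length_top]

theorem relLength_eq_one_of_covBy {U V : Submodule R M} (h : U ⋖ V) : relLength U V = 1 :=
  Module.length_eq_one_iff.mpr ((covBy_iff_quot_is_simple h.le).mp h)

end RelativeLength

section PowerLengths

variable {A : Type*} [CommRing A] {J K U V : Ideal A} {x : A}

theorem span_singleton_mul_eq_map (x : A) (U : Ideal A) :
    Ideal.span {x} * U = Submodule.map (LinearMap.mulLeft A x) U := by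
  ext w
  rw [Ideal.mem_span_singleton_mul, Submodule.mem_map]
  rfl

theorem relLength_sup_span_pow_succ_mul (h : U ≤ V) (m : ℕ) :
    relLength ((J ⊔ Ideal.span {x}) ^ (m + 1) * U) ((J ⊔ Ideal.span {x}) ^ (m + 1) * V) =
      relLength (Submodule.comap (LinearMap.mulLeft A x) ((J ⊔ Ideal.span {x}) ^ (m + 1) * U))
        ((J ⊔ Ideal.span {x}) ^ m * V) +
      relLength ((J ⊔ Ideal.span {x}) ^ (m + 1) * U ⊔
        Ideal.span {x} * ((J ⊔ Ideal.span {x}) ^ m * V)) (J ^ (m + 1) * V) := by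
  set Q := J ⊔ Ideal.span {x}
  have hV : Q ^ (m + 1) * V = J ^ (m + 1) * V ⊔ Ideal.span {x} * (Q ^ m * V) :=
    sup_span_singleton_pow_succ_mul J x m V
  rw [relLength_add (V := Q ^ (m + 1) * U ⊔ Ideal.span {x} * (Q ^ m * V)) le_sup_left
    (sup_le (Ideal.mul_mono_right h) (hV ▸ le_sup_right)), relLength_sup_right,
    span_singleton_mul_eq_map, relLength_map, ← span_singleton_mul_eq_map]
  congr 1
  rw [← relLength_sup_right, hV, sup_assoc, sup_left_comm (Ideal.span _ * _), sup_idem,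
    ← sup_assoc, sup_right_comm, relLength_sup_right]

theorem pow_mul_le_comap_mulLeft (m : ℕ) :
    (J ⊔ Ideal.span {x}) ^ m * U ≤
      Submodule.comap (LinearMap.mulLeft A x) ((J ⊔ Ideal.span {x}) ^ (m + 1) * U) := by
  rw [← Submodule.map_le_iff_le_comap, ← span_singleton_mul_eq_map, pow_succ', mul_assoc]
  exact Ideal.mul_mono_left le_sup_right

theorem relLength_sup_span_pow_succ_mul_le (h : U ≤ V) (m : ℕ) :
    relLength ((J ⊔ Ideal.span {x}) ^ (m + 1) * U) ((J ⊔ Ideal.span {x}) ^ (m + 1) * V) ≤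
      relLength ((J ⊔ Ideal.span {x}) ^ m * U) ((J ⊔ Ideal.span {x}) ^ m * V) +
        relLength (J ^ (m + 1) * U) (J ^ (m + 1) * V) := by
  rw [relLength_sup_span_pow_succ_mul h]
  refine add_le_add (relLength_anti_left (inf_le_right.trans (pow_mul_le_comap_mulLeft m)))
    (relLength_anti_left (inf_le_right.trans (le_sup_of_le_left ?_)))
  exact Ideal.mul_mono_left (Ideal.pow_right_mono le_sup_left _)

theorem relLength_sup_span_pow_succ_mul_eq (hx : ∀ n, IsSMulRegular (A ⧸ J ^ n) x)
    (hQ : J ⊔ Ideal.span {x} ≤ U) (h : U ≤ V) (m : ℕ) :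
    relLength ((J ⊔ Ideal.span {x}) ^ (m + 1) * U) ((J ⊔ Ideal.span {x}) ^ (m + 1) * V) =
      relLength ((J ⊔ Ideal.span {x}) ^ m * U) ((J ⊔ Ideal.span {x}) ^ m * V) +
        relLength (J ^ (m + 1) * U) (J ^ (m + 1) * V) := by
  refine (relLength_sup_span_pow_succ_mul_le h m).antisymm ?_
  rw [relLength_sup_span_pow_succ_mul h]
  refine add_le_add (relLength_anti_left (inf_le_right.trans fun w hw =>
    mem_pow_mul_of_mul_mem_pow_succ_mul hx (le_sup_left.trans hQ) hw))
    (relLength_anti_left fun w hw => mem_pow_succ_mul_of_mem_sup hx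
      (hQ (Ideal.mem_sup_right (Ideal.mem_span_singleton_self x))) (Ideal.mul_le_left hw.1) ?_)
  refine sup_le_sup_left ?_ ((J ⊔ Ideal.span {x}) ^ (m + 1) * U) hw.2
  exact Ideal.mul_mono_right Ideal.mul_le_left

theorem relLength_ofList_pow_mul_le (h : U ≤ V) (l : List A) (m : ℕ) :
    relLength (Ideal.ofList l ^ m * U) (Ideal.ofList l ^ m * V) ≤
      relLength U V * (l.length.multichoose m : ℕ∞) := by
  induction l using List.reverseRecOn generalizing m with
  | nil =>
    cases m with
    | zero => simp
    | succ m => exact (relLength_eq_zero_iff.mpr (by simp)).trans_le zero_le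
  | append_singleton l x ihl =>
    rw [ofList_append_singleton, List.length_append, List.length_singleton]
    induction m with
    | zero => simp
    | succ m ihm =>
      rw [Nat.multichoose_succ_succ, add_comm (l.length.multichoose (m + 1)), Nat.cast_add, mul_add]
      exact (relLength_sup_span_pow_succ_mul_le h m).trans (add_le_add ihm (ihl (m + 1)))

theorem relLength_ofList_pow_mul_eq {l : List A} (hl : IsWeaklyRegular A l)
    (hU : Ideal.ofList l ≤ U) (h : U ≤ V) (m : ℕ) :
    relLength (Ideal.ofList l ^ m * U) (Ideal.ofList l ^ m * V) =
      relLength U V * (l.length.multichoose m : ℕ∞) := by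
  induction l using List.reverseRecOn generalizing m with
  | nil =>
    cases m with
    | zero => simp
    | succ m => exact (relLength_eq_zero_iff.mpr (by simp)).trans (by simp)
  | append_singleton l x ihl =>
    have hx := isSMulRegular_quotient_ofList_pow hl
    rw [ofList_append_singleton] at hU ⊢
    rw [List.length_append, List.length_singleton]
    induction m with
    | zero => simp
    | succ m ihm =>
      rw [Nat.multichoose_succ_succ, add_comm (l.length.multichoose (m + 1)), Nat.cast_add,
        mul_add, ← ihm, ← ihl (isWeaklyRegular_append_singleton_iff.mp hl).1 (le_sup_left.trans hU)]
      exact relLength_sup_span_pow_succ_mul_eq hx hU h m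

theorem relLength_span_add_le_succ (hx : ∀ n, IsSMulRegular (A ⧸ J ^ n) x)
    (hK : J ⊔ Ideal.span {x} ≤ K) {k : ℕ} {w w' : A}
    (hw : w ∈ (J ⊔ Ideal.span {x}) ^ k) (hw' : w' ∈ J ^ k)
    (hww' : w - w' ∈ Ideal.span {x} * (J ⊔ Ideal.span {x}) ^ (k - 1)) (j : ℕ) :
    relLength ((J ⊔ Ideal.span {x}) ^ (k + j) * K)
        ((J ⊔ Ideal.span {x}) ^ j * Ideal.span {w}) +
      relLength (J ^ (k + (j + 1)) * K) (J ^ (j + 1) * Ideal.span {w'}) ≤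
    relLength ((J ⊔ Ideal.span {x}) ^ (k + (j + 1)) * K)
      ((J ⊔ Ideal.span {x}) ^ (j + 1) * Ideal.span {w}) := by
  set Q := J ⊔ Ideal.span {x}
  rw [relLength_eq_add (P := Q ^ (k + (j + 1)) * K ⊔ Ideal.span {x} * Q ^ (k + j)) _ le_sup_left]
  refine add_le_add ?_ ?_
  · refine relLength_le_of_comap_le (LinearMap.mulLeft A x) (fun v hv => ⟨?_, ?_⟩)
      (inf_le_right.trans fun v hv =>
        mem_pow_mul_of_mul_mem_pow_succ_mul hx (le_sup_left.trans hK) hv)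
    · exact pow_mul_le_comap_mulLeft j hv
    · obtain ⟨q, hq, rfl⟩ := Ideal.mem_mul_span_singleton.mp hv
      refine Ideal.mem_sup_right (Ideal.mul_mem_mul (Ideal.mem_span_singleton_self x) ?_)
      rw [add_comm, pow_add]
      exact Ideal.mul_mem_mul hq hw
  · rw [← relLength_sup_right (Q ^ (k + (j + 1)) * K ⊔ Ideal.span {x} * Q ^ (k + j))]
    refine relLength_le_of_comap_le LinearMap.id (fun v hv => ?_) fun v ⟨hv, hv'⟩ => ?_
    · obtain ⟨q, hq, rfl⟩ := Ideal.mem_mul_span_singleton.mp hv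
      have hqQ : q ∈ Q ^ (j + 1) := Ideal.pow_right_mono le_sup_left _ hq
      have hdiff : q * (w - w') ∈ Ideal.span {x} * Q ^ (k + j) := by
        have := Ideal.mul_mem_mul hqQ hww'
        rw [mul_left_comm, ← pow_add] at this
        exact Ideal.mul_mono_right (Ideal.pow_le_pow_right (by omega)) this
      have hsub : q * w' = -(q * (w - w')) + q * w := by ring
      rw [hsub]
      exact Submodule.add_mem_sup (neg_mem (Ideal.mem_sup_right hdiff))
        (Ideal.mem_mul_span_singleton.mpr ⟨q, hqQ, rfl⟩)
    · have hxK : x ∈ K := hK (Ideal.mem_sup_right (Ideal.mem_span_singleton_self x))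
      refine mem_pow_succ_mul_of_mem_sup hx hxK ?_ hv'
      obtain ⟨q, hq, rfl⟩ := Ideal.mem_mul_span_singleton.mp hv
      have hmem := Ideal.mul_mem_mul hw' hq
      rwa [← pow_add, mul_comm] at hmem

theorem relLength_span_le_of_add_mul (hx : ∀ n, IsSMulRegular (A ⧸ J ^ n) x) (hK : J ≤ K) {k : ℕ}
    {α : A} (hα : α ∈ (J ⊔ Ideal.span {x}) ^ (k + 1) * K) (β : A) (j : ℕ) :
    relLength ((J ⊔ Ideal.span {x}) ^ (k + j) * K)
        ((J ⊔ Ideal.span {x}) ^ j * Ideal.span {β}) ≤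
      relLength ((J ⊔ Ideal.span {x}) ^ (k + 1 + j) * K)
        ((J ⊔ Ideal.span {x}) ^ j * Ideal.span {α + x * β}) := by
  set Q := J ⊔ Ideal.span {x}
  rw [← relLength_sup_right (Q ^ (k + 1 + j) * K)]
  refine relLength_le_of_comap_le (LinearMap.mulLeft A x) (fun v hv => ?_) fun v hv => ?_
  · obtain ⟨q, hq, rfl⟩ := Ideal.mem_mul_span_singleton.mp hv
    have hsub : x * (q * β) = -(q * α) + q * (α + x * β) := by ring
    change x * (q * β) ∈ Q ^ (k + 1 + j) * K ⊔ Q ^ j * Ideal.span {α + x * β}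
    rw [hsub]
    refine Submodule.add_mem_sup (neg_mem ?_) (Ideal.mem_mul_span_singleton.mpr ⟨q, hq, rfl⟩)
    rw [add_comm (k + 1), pow_add, mul_assoc]
    exact Ideal.mul_mem_mul hq hα
  · refine mem_pow_mul_of_mul_mem_pow_succ_mul hx hK ?_
    rw [add_right_comm]
    exact hv.2

theorem exists_mem_pow_sub_mem {k : ℕ} {w : A} (hw : w ∈ (J ⊔ Ideal.span {x}) ^ k) :
    ∃ w' ∈ J ^ k, w - w' ∈ Ideal.span {x} * (J ⊔ Ideal.span {x}) ^ (k - 1) := by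
  cases k with
  | zero => exact ⟨w, by simp, by simp⟩
  | succ k =>
    rw [← Ideal.mul_top (_ ^ _), sup_span_singleton_pow_succ_mul, Ideal.mul_top,
      Ideal.mul_top] at hw
    obtain ⟨w', hw', v, hv, rfl⟩ := mem_sup_span_singleton_mul_iff.mp hw
    refine ⟨w', hw', ?_⟩
    rw [add_sub_cancel_left]
    exact Ideal.mul_mem_mul (Ideal.mem_span_singleton_self x) hv

theorem one_le_relLength_span_of_notMem {w : A} (hw : w ∉ K) :
    1 ≤ relLength K (Ideal.span {w}) := by
  rwa [one_le_relLength_iff, Ideal.span_singleton_le_iff_mem]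

theorem multichoose_succ_le_relLength_span_of_notMem_sup {n : ℕ}
    (hx : ∀ n, IsSMulRegular (A ⧸ J ^ n) x) (hK : J ⊔ Ideal.span {x} ≤ K)
    (hJ : ∀ k, ∀ w ∈ J ^ k, w ∉ J ^ k * K → ∀ j, (n.multichoose j : ℕ∞) ≤
      relLength (J ^ (k + j) * K) (J ^ j * Ideal.span {w})) {k : ℕ} {w : A}
    (hw : w ∈ (J ⊔ Ideal.span {x}) ^ k)
    (hwK : w ∉ (J ⊔ Ideal.span {x}) ^ k * K ⊔ Ideal.span {x} * (J ⊔ Ideal.span {x}) ^ (k - 1))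
    (j : ℕ) :
    ((n + 1).multichoose j : ℕ∞) ≤
      relLength ((J ⊔ Ideal.span {x}) ^ (k + j) * K)
        ((J ⊔ Ideal.span {x}) ^ j * Ideal.span {w}) := by
  obtain ⟨w', hw', hww'⟩ := exists_mem_pow_sub_mem hw
  have hw'K : w' ∉ J ^ k * K := fun hmem => hwK <| by
    rw [← add_sub_cancel w' w]
    exact Submodule.add_mem_sup (Ideal.mul_mono_left (Ideal.pow_right_mono le_sup_left k) hmem) hww'
  induction j with
  | zero =>
    simpa using one_le_relLength_span_of_notMem fun hmem => hwK (Ideal.mem_sup_left hmem)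
  | succ j ih =>
    rw [Nat.multichoose_succ_succ, add_comm, Nat.cast_add]
    exact (add_le_add ih (hJ k w' hw' hw'K (j + 1))).trans
      (relLength_span_add_le_succ hx hK hw hw' hww' j)

theorem multichoose_succ_le_relLength_span {n : ℕ} (hx : ∀ n, IsSMulRegular (A ⧸ J ^ n) x)
    (hK : J ⊔ Ideal.span {x} ≤ K)
    (hJ : ∀ k, ∀ w ∈ J ^ k, w ∉ J ^ k * K → ∀ j, (n.multichoose j : ℕ∞) ≤
      relLength (J ^ (k + j) * K) (J ^ j * Ideal.span {w})) {k : ℕ} {w : A}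
    (hw : w ∈ (J ⊔ Ideal.span {x}) ^ k) (hwK : w ∉ (J ⊔ Ideal.span {x}) ^ k * K) (j : ℕ) :
    ((n + 1).multichoose j : ℕ∞) ≤
      relLength ((J ⊔ Ideal.span {x}) ^ (k + j) * K)
        ((J ⊔ Ideal.span {x}) ^ j * Ideal.span {w}) := by
  induction k generalizing w with
  | zero =>
    refine multichoose_succ_le_relLength_span_of_notMem_sup hx hK hJ hw (fun hmem => hwK ?_) j
    refine (sup_le le_rfl ?_ : _ ≤ (J ⊔ Ideal.span {x}) ^ 0 * K) hmem
    rw [zero_tsub, pow_zero, one_mul, mul_one]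
    exact le_sup_right.trans hK
  | succ k ih =>
    by_cases hmem : w ∈ (J ⊔ Ideal.span {x}) ^ (k + 1) * K ⊔
        Ideal.span {x} * (J ⊔ Ideal.span {x}) ^ k
    · obtain ⟨α, hα, β, hβ, rfl⟩ := mem_sup_span_singleton_mul_iff.mp hmem
      have hβK : β ∉ (J ⊔ Ideal.span {x}) ^ k * K := fun hβK => hwK <| by
        refine add_mem hα ?_
        rw [pow_succ', mul_assoc]
        exact Ideal.mul_mem_mul (Ideal.mem_sup_right (Ideal.mem_span_singleton_self x)) hβK
      exact (ih hβ hβK).trans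
        (relLength_span_le_of_add_mul hx (le_sup_left.trans hK) hα β j)
    · exact multichoose_succ_le_relLength_span_of_notMem_sup hx hK hJ hw hmem j

theorem multichoose_le_relLength_span_of_mem_pow {l : List A} (hl : IsWeaklyRegular A l)
    (hK : Ideal.ofList l ≤ K) (k : ℕ) :
    ∀ w ∈ Ideal.ofList l ^ k, w ∉ Ideal.ofList l ^ k * K → ∀ j,
      (l.length.multichoose j : ℕ∞) ≤
        relLength (Ideal.ofList l ^ (k + j) * K) (Ideal.ofList l ^ j * Ideal.span {w}) := by
  induction l using List.reverseRecOn generalizing k with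
  | nil =>
    intro w _ hwK j
    cases j with
    | zero => simpa using one_le_relLength_span_of_notMem hwK
    | succ j => simp
  | append_singleton l x ih =>
    have hx := isSMulRegular_quotient_ofList_pow hl
    rw [ofList_append_singleton] at hK ⊢
    rw [List.length_append, List.length_singleton]
    exact fun w hw hwK => multichoose_succ_le_relLength_span hx hK
      (ih (isWeaklyRegular_append_singleton_iff.mp hl).1 (le_sup_left.trans hK)) hw hwK

theorem multichoose_le_relLength_span {l : List A} (hl : IsWeaklyRegular A l)
    (hK : Ideal.ofList l ≤ K) {k : ℕ} {w : A} (hw : w ∉ Ideal.ofList l ^ k * K) (j : ℕ) :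
    (l.length.multichoose j : ℕ∞) ≤
      relLength (Ideal.ofList l ^ (k + j) * K) (Ideal.ofList l ^ j * Ideal.span {w}) := by
  induction k generalizing K with
  | zero => exact multichoose_le_relLength_span_of_mem_pow hl hK 0 w (by simp) hw j
  | succ k ih =>
    by_cases hmem : w ∈ Ideal.ofList l ^ (k + 1)
    · exact multichoose_le_relLength_span_of_mem_pow hl hK (k + 1) w hmem hw j
    · refine (ih le_rfl (pow_succ (Ideal.ofList l) k ▸ hmem)).trans
        (relLength_anti_left (inf_le_right.trans ?_))
      rw [← pow_succ, add_right_comm]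
      exact Ideal.mul_le_left

end PowerLengths

section SallyModule

theorem exists_covBy_of_not_of_top {α : Type*} [PartialOrder α] [OrderTop α] [WellFoundedLT α]
    [WellFoundedGT α] {p : α → Prop} {a : α} (ha : ¬ p a) (htop : p ⊤) :
    ∃ b c, b ⋖ c ∧ ¬ p b ∧ p c := by
  obtain ⟨b, hb⟩ := exists_maximal_of_wellFoundedGT (fun b => ¬ p b) ⟨a, ha⟩
  have hbtop : ¬ IsMax b := fun hmax => hb.prop (hmax.eq_top ▸ htop)
  obtain ⟨c, hbc⟩ := exists_covBy_of_wellFoundedLT hbtop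
  exact ⟨b, c, hbc, hb.prop, not_not.mp (hb.not_prop_of_gt hbc.lt)⟩

theorem exists_covBy_of_relLength_top_ne_top {R M : Type*} [CommRing R] [AddCommGroup M]
    [Module R M] {U : Submodule R M} (hU : relLength U ⊤ ≠ ⊤) {p : Submodule R M → Prop}
    (hpU : ¬ p U) (htop : p ⊤) : ∃ V W, U ≤ V ∧ V ⋖ W ∧ ¬ p V ∧ p W := by
  rw [relLength_top, Module.length_ne_top_iff, isFiniteLength_iff_isNoetherian_isArtinian] at hU
  obtain ⟨_, _⟩ := hU
  obtain ⟨V, W, hVW, hV, hW⟩ := exists_covBy_of_not_of_top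
    (p := fun V : Submodule R (M ⧸ U) => p (V.comap U.mkQ)) (a := ⊥)
    (by rwa [← LinearMap.ker, Submodule.ker_mkQ]) htop
  exact ⟨_, _, Submodule.le_comap_mkQ U V,
    Submodule.comap_covBy_of_surjective U.mkQ_surjective hVW, hV, hW⟩

variable {A : Type*} [CommRing A] {l : List A} {I K K' : Ideal A} {δ : ℕ}

/-- The length of the component `I ^ (n + 1) / Q ^ n * I` of degree `n` of the Sally module of `I`
with respect to `Q`. -/
noncomputable def sallyLength (Q I : Ideal A) (n : ℕ) : ℕ∞ :=
  relLength (Q ^ n * I) (I ^ (n + 1))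

/-- The Sally module of `I` with respect to `Q` has rank at most one over a polynomial ring in `d`
variables, expressed through its Hilbert function: there is no room for two free submodules of
rank one in independent position, whatever the degrees `a` and `b` of their generators. -/
def SallyRankLeOne (d : ℕ) (Q I : Ideal A) : Prop :=
  ∀ a b, ∃ n, a ≤ n ∧ b ≤ n ∧
    sallyLength Q I n < (d.multichoose (n - a) : ℕ∞) + (d.multichoose (n - b) : ℕ∞)

theorem pow_mul_pow_le {Q : Ideal A} (hQI : Q ≤ I) (m n : ℕ) : Q ^ m * I ^ n ≤ I ^ (m + n) := by
  rw [pow_add]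
  exact Ideal.mul_mono_left (Ideal.pow_right_mono hQI m)

theorem multichoose_le_relLength (hl : IsWeaklyRegular A l) (hK : Ideal.ofList l ≤ K) {k j : ℕ}
    {W W' : Ideal A} (hW : ¬ W ≤ Ideal.ofList l ^ k * K) (hWW' : Ideal.ofList l ^ j * W ≤ W') :
    (l.length.multichoose j : ℕ∞) ≤ relLength (Ideal.ofList l ^ (k + j) * K) W' := by
  obtain ⟨w, hw, hwK⟩ := SetLike.not_le_iff_exists.mp hW
  refine (multichoose_le_relLength_span hl hK hwK j).trans (relLength_mono_right _ ?_)
  exact (Ideal.mul_mono_right ((Ideal.span_singleton_le_iff_mem _).mpr hw)).trans hWW'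

-- Both failing would give rank-one pieces in the sub and in the quotient of
-- `0 → (I ^ (n + 1) ⊓ Q ^ m * K) / Q ^ n * I → I ^ (n + 1) / Q ^ n * I`, where `n = m + δ`.
theorem le_pow_mul_or_inf_le (hl : IsWeaklyRegular A l) (hQI : Ideal.ofList l ≤ I)
    (hS : SallyRankLeOne l.length (Ideal.ofList l) I) (hQK : Ideal.ofList l ≤ K)
    (hIK : Ideal.ofList l ^ δ * I ≤ K) :
    (∀ m, I ^ (m + δ + 1) ≤ Ideal.ofList l ^ m * K) ∨
      ∀ m, I ^ (m + δ + 1) ⊓ Ideal.ofList l ^ m * K ≤ Ideal.ofList l ^ (m + δ) * I := by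
  by_contra! hcon
  obtain ⟨⟨b, hb⟩, a, ha⟩ := hcon
  obtain ⟨n, han, hbn, hlt⟩ := hS (a + δ) (b + δ)
  obtain ⟨i, rfl⟩ := Nat.exists_eq_add_of_le han
  obtain ⟨j, hj⟩ := Nat.exists_eq_add_of_le hbn
  have hij : a + i = b + j := by omega
  have hP : Ideal.ofList l ^ (a + δ + i) * I ≤ Ideal.ofList l ^ (a + i) * K := by
    rw [add_right_comm, pow_add, mul_assoc]
    exact Ideal.mul_mono_right hIK
  refine hlt.not_ge ?_
  rw [sallyLength, relLength_eq_add _ hP]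
  refine add_le_add ?_ ?_
  · rw [Nat.add_sub_cancel_left]
    refine multichoose_le_relLength hl hQI ha (le_inf ?_ ?_)
    · refine (Ideal.mul_mono_right inf_le_left).trans ((pow_mul_pow_le hQI _ _).trans_eq ?_)
      congr 1
      omega
    · refine (Ideal.mul_mono_right inf_le_right).trans_eq ?_
      rw [← mul_assoc, ← pow_add, add_comm]
  · rw [hj, Nat.add_sub_cancel_left, hij]
    refine multichoose_le_relLength hl hQK hb ((pow_mul_pow_le hQI _ _).trans_eq ?_)
    congr 1
    omega

theorem sallyLength_add_eq_relLength (hIK : Ideal.ofList l ^ δ * I ≤ K)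
    (hK : ∀ m, I ^ (m + δ + 1) ⊓ Ideal.ofList l ^ m * K ≤ Ideal.ofList l ^ (m + δ) * I) (m : ℕ) :
    sallyLength (Ideal.ofList l) I (m + δ) =
      relLength (Ideal.ofList l ^ m * K) (I ^ (m + δ + 1)) := by
  have hle : Ideal.ofList l ^ (m + δ) * I ≤ Ideal.ofList l ^ m * K := by
    rw [pow_add, mul_assoc]
    exact Ideal.mul_mono_right hIK
  rw [sallyLength, relLength_eq_add _ hle, relLength_eq_zero_iff.mpr (hK m), zero_add]

theorem relLength_ofList_pow_mul_of_covBy (hl : IsWeaklyRegular A l) (hQK : Ideal.ofList l ≤ K)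
    (hKK' : K ⋖ K') (m : ℕ) :
    relLength (Ideal.ofList l ^ m * K) (Ideal.ofList l ^ m * K') =
      (l.length.multichoose m : ℕ∞) := by
  rw [relLength_ofList_pow_mul_eq hl hQK hKK'.le, relLength_eq_one_of_covBy hKK', one_mul]

theorem exists_covBy_of_sallyRankLeOne (hl : IsWeaklyRegular A l) (hQI : Ideal.ofList l ≤ I)
    (hS : SallyRankLeOne l.length (Ideal.ofList l) I) (hfin : relLength (Ideal.ofList l) ⊤ ≠ ⊤)
    (hQK : Ideal.ofList l ≤ K) (hIK : Ideal.ofList l ^ δ * I ≤ K) {ε : ℕ} {v : A}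
    (hvI : v ∈ I ^ (ε + δ + 1)) (hvQ : v ∈ Ideal.ofList l ^ ε)
    (hvK : v ∉ Ideal.ofList l ^ ε * K) :
    ∃ K₁ K₂, K ≤ K₁ ∧ K₁ ⋖ K₂ ∧
      (∀ m, I ^ (m + δ + 1) ⊓ Ideal.ofList l ^ m * K₁ ≤ Ideal.ofList l ^ (m + δ) * I) ∧
      ∀ m, I ^ (m + δ + 1) ≤ Ideal.ofList l ^ m * K₂ := by
  obtain ⟨K₁, K₂, hK₁, hcov, hvK₁, hvK₂⟩ := exists_covBy_of_relLength_top_ne_top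
    (p := fun K => v ∈ Ideal.ofList l ^ ε * K)
    (ne_top_of_le_ne_top hfin (relLength_anti_left (inf_le_right.trans hQK))) hvK
    (by rwa [Ideal.mul_top])
  have hK₂ := hK₁.trans hcov.le
  refine ⟨K₁, K₂, hK₁, hcov, ?_, ?_⟩
  · exact (le_pow_mul_or_inf_le hl hQI hS (hQK.trans hK₁) (hIK.trans hK₁)).resolve_left
      fun hle => hvK₁ (hle ε hvI)
  · refine (le_pow_mul_or_inf_le hl hQI hS (hQK.trans hK₂) (hIK.trans hK₂)).resolve_right
      fun hle => hvK₁ ?_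
    have hv := hle ε ⟨hvI, hvK₂⟩
    rw [pow_add, mul_assoc] at hv
    exact Ideal.mul_mono_right (hIK.trans hK₁) hv

theorem pow_mul_le_sup_of_relLength_eq (hl : IsWeaklyRegular A l) (hQK : Ideal.ofList l ≤ K)
    (hKK' : K ⋖ K') {m : ℕ} {W : Ideal A} (hW : W ≤ Ideal.ofList l ^ m * K')
    (h : relLength (Ideal.ofList l ^ m * K) W = (l.length.multichoose m : ℕ∞)) :
    Ideal.ofList l ^ m * K' ≤ Ideal.ofList l ^ m * K ⊔ W := by
  have hadd := relLength_add (U := Ideal.ofList l ^ m * K) (V := Ideal.ofList l ^ m * K ⊔ W)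
    le_sup_left (sup_le (Ideal.mul_mono_right hKK'.le) hW)
  rw [relLength_sup_right, h, relLength_ofList_pow_mul_of_covBy hl hQK hKK'] at hadd
  exact relLength_eq_zero_iff.mp
    ((ENat.addLECancellable_natCast _).inj.mp (hadd.symm.trans (add_zero _).symm))

theorem sallyLength_add_le (hl : IsWeaklyRegular A l) (hQI : Ideal.ofList l ≤ I)
    (hS : SallyRankLeOne l.length (Ideal.ofList l) I) (hfin : relLength (Ideal.ofList l) ⊤ ≠ ⊤)
    (hQK : Ideal.ofList l ≤ K) (hIK : Ideal.ofList l ^ δ * I ≤ K) {ε : ℕ} {v : A}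
    (hvI : v ∈ I ^ (ε + δ + 1)) (hvQ : v ∈ Ideal.ofList l ^ ε)
    (hvK : v ∉ Ideal.ofList l ^ ε * K) :
    (∀ m, sallyLength (Ideal.ofList l) I (m + δ) ≤ (l.length.multichoose m : ℕ∞)) ∧
      ∀ m, sallyLength (Ideal.ofList l) I (m + δ) = (l.length.multichoose m : ℕ∞) →
        ∀ n, sallyLength (Ideal.ofList l) I (n + m + δ) =
          (l.length.multichoose (n + m) : ℕ∞) := by
  obtain ⟨K₁, K₂, hK₁, hcov, hinf, hle⟩ :=
    exists_covBy_of_sallyRankLeOne hl hQI hS hfin hQK hIK hvI hvQ hvK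
  have hlen := relLength_ofList_pow_mul_of_covBy hl (hQK.trans hK₁) hcov
  simp only [sallyLength_add_eq_relLength (hIK.trans hK₁) hinf]
  have hub : ∀ m, relLength (Ideal.ofList l ^ m * K₁) (I ^ (m + δ + 1)) ≤
      (l.length.multichoose m : ℕ∞) := fun m =>
    (relLength_mono_right _ (hle m)).trans_eq (hlen m)
  refine ⟨hub, fun m hm n => (hub _).antisymm ?_⟩
  rw [← hlen, ← relLength_sup_right _ (I ^ _), pow_add, mul_assoc, mul_assoc]
  refine relLength_mono_right _ ?_
  calc Ideal.ofList l ^ n * (Ideal.ofList l ^ m * K₂)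
    _ ≤ Ideal.ofList l ^ n * (Ideal.ofList l ^ m * K₁ ⊔ I ^ (m + δ + 1)) :=
      Ideal.mul_mono_right (pow_mul_le_sup_of_relLength_eq hl (hQK.trans hK₁) hcov (hle m) hm)
    _ ≤ Ideal.ofList l ^ n * (Ideal.ofList l ^ m * K₁) ⊔ I ^ (n + m + δ + 1) := by
      rw [Ideal.mul_sup]
      refine sup_le_sup_left ((pow_mul_pow_le hQI _ _).trans_eq ?_) _
      simp only [add_assoc]

theorem sallyLength_succ_eq_multichoose (hl : IsWeaklyRegular A l) (hlen : 0 < l.length)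
    (hQI : Ideal.ofList l ≤ I) (hfin : relLength (Ideal.ofList l) ⊤ ≠ ⊤)
    (hS : SallyRankLeOne l.length (Ideal.ofList l) I)
    (hone : sallyLength (Ideal.ofList l) I 1 = l.length) (n : ℕ) :
    sallyLength (Ideal.ofList l) I (n + 1) = (l.length.multichoose (n + 1) : ℕ∞) := by
  by_cases hI : I ^ 2 ≤ Ideal.ofList l
  · have hne : ¬ I ^ 2 ≤ Ideal.ofList l ^ 1 * I := by
      rw [← one_le_relLength_iff]
      exact (Nat.one_le_cast.mpr hlen).trans_eq hone.symm
    obtain ⟨v, hvI, hv⟩ := SetLike.not_le_iff_exists.mp hne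
    have h := sallyLength_add_le (δ := 0) (ε := 1) hl hQI hS hfin hQI (by simp) hvI
      (by simpa using hI hvI) hv
    exact h.2 1 (by simpa using hone) n
  · obtain ⟨v, hvI, hv⟩ := SetLike.not_le_iff_exists.mp hI
    obtain ⟨hle, heq⟩ := sallyLength_add_le (δ := 1) (ε := 0) hl hQI hS hfin le_rfl
      (by simpa using Ideal.mul_le_left) hvI (by simp) (by simpa using hv)
    have hlen_one : l.length = 1 := by
      have := hle 0
      rw [zero_add, hone, Nat.multichoose_zero_right] at this
      exact le_antisymm (Nat.cast_le.mp this) hlen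
    simpa [hlen_one] using heq 0 (by simpa [hlen_one] using hone) n

end SallyModule

section BinomialSums

open Filter Topology Asymptotics

theorem isEquivalent_sub_add_natCast (a k : ℕ) :
    (fun n : ℕ => ((n - a + k : ℕ) : ℝ)) ~[atTop] fun n => (n : ℝ) := by
  have hconst : (fun _ : ℕ => (k : ℝ) - a) =o[atTop] fun n : ℕ => (n : ℝ) :=
    isLittleO_const_left.mpr (.inr (tendsto_norm_atTop_atTop.comp tendsto_natCast_atTop_atTop))
  refine (IsEquivalent.refl.add_isLittleO hconst).congr_left ?_
  filter_upwards [eventually_ge_atTop a] with n hn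
  simp only [Pi.add_apply, Nat.cast_add, Nat.cast_sub hn]
  ring

theorem tendsto_choose_div_pow (a k : ℕ) :
    Tendsto (fun n : ℕ => ((n - a + k).choose k : ℝ) / (n : ℝ) ^ k) atTop
      (𝓝 (1 / k.factorial)) := by
  have hatTop : Tendsto (fun n : ℕ => n - a + k) atTop atTop :=
    tendsto_atTop_mono (fun n => Nat.le_add_right _ _) (tendsto_sub_atTop_nat a)
  have hchoose : (fun n : ℕ => ((n - a + k).choose k : ℝ)) ~[atTop]
      fun n => (n : ℝ) ^ k / k.factorial :=
    ((isEquivalent_choose k).comp_tendsto hatTop).trans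
      (((isEquivalent_sub_add_natCast a k).pow k).div .refl)
  have hk : (1 / k.factorial : ℝ) ≠ 0 := by positivity
  refine (isEquivalent_const_iff_tendsto hk).mp
    ((hchoose.div (.refl (u := fun n : ℕ => (n : ℝ) ^ k))).congr_right ?_)
  filter_upwards [eventually_ne_atTop 0] with n hn
  have : (n : ℝ) ^ k ≠ 0 := pow_ne_zero _ (Nat.cast_ne_zero.mpr hn)
  simp only [Pi.div_apply, Function.const_apply]
  field_simp

/-- The value at `n` of the integer-valued polynomial of degree at most `d` with coefficients
`c 0, …, c d`, written as Hilbert polynomials are: the Hilbert coefficients are `(-1) ^ i * c i`. -/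
def binomialSum (c : ℕ → ℤ) (d n : ℕ) : ℤ :=
  ∑ i ∈ Finset.range (d + 1), c i * ((n + d - i).choose (d - i) : ℤ)

theorem binomialSum_zero (c : ℕ → ℤ) (n : ℕ) : binomialSum c 0 n = c 0 := by
  simp [binomialSum]

theorem binomialSum_succ (c : ℕ → ℤ) (d n : ℕ) :
    binomialSum c (d + 1) n =
      c 0 * ((n + (d + 1)).choose (d + 1) : ℤ) + binomialSum (fun i => c (i + 1)) d n := by
  rw [binomialSum, Finset.sum_range_succ', add_comm]
  simp only [binomialSum, Nat.sub_zero, ← add_assoc, Nat.add_sub_add_right]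

theorem binomialSum_sub (c c' : ℕ → ℤ) (d n : ℕ) :
    binomialSum (c - c') d n = binomialSum c d n - binomialSum c' d n := by
  simp only [binomialSum, Pi.sub_apply, sub_mul, Finset.sum_sub_distrib]

theorem binomialSum_single_sub_single (x y : ℤ) (d n : ℕ) :
    binomialSum (Pi.single 0 x - Pi.single 1 y) (d + 1) n =
      x * ((n + (d + 1)).choose (d + 1) : ℤ) - y * ((n + d).choose d : ℤ) := by
  rw [binomialSum_sub]
  simp [binomialSum, Pi.single_apply]

theorem tendsto_binomialSum_div_pow (c : ℕ → ℤ) (d : ℕ) :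
    Tendsto (fun n : ℕ => (binomialSum c d n : ℝ) / (n : ℝ) ^ d) atTop
      (𝓝 (c 0 * (1 / d.factorial))) := by
  induction d generalizing c with
  | zero => simp [binomialSum_zero]
  | succ d ih =>
    have hlead := (tendsto_choose_div_pow 0 (d + 1)).const_mul (c 0 : ℝ)
    have hrest := (ih fun i => c (i + 1)).mul (tendsto_one_div_atTop_nhds_zero_nat (𝕜 := ℝ))
    rw [mul_zero] at hrest
    have hsum := hlead.add hrest
    rw [add_zero] at hsum
    refine hsum.congr fun n => ?_
    rw [binomialSum_succ, div_mul_div_comm, mul_one, ← pow_succ, Nat.sub_zero]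
    push_cast
    ring

theorem coeff_zero_eq_zero_of_tendsto {c : ℕ → ℤ} {d : ℕ}
    (h : Tendsto (fun n : ℕ => (binomialSum c d n : ℝ) / (n : ℝ) ^ d) atTop (𝓝 0)) :
    c 0 = 0 := by
  have hlim := tendsto_nhds_unique (tendsto_binomialSum_div_pow c d) h
  have hd : (1 / d.factorial : ℝ) ≠ 0 := by positivity
  exact_mod_cast (mul_eq_zero.mp hlim).resolve_right hd

theorem coeff_zero_eq_zero_of_eventually_eq_zero {c : ℕ → ℤ} {d : ℕ}
    (h : ∀ᶠ n in atTop, binomialSum c d n = 0) : c 0 = 0 := by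
  refine coeff_zero_eq_zero_of_tendsto (d := d) (tendsto_const_nhds.congr' ?_)
  filter_upwards [h] with n hn
  rw [hn, Int.cast_zero, zero_div]

theorem coeff_eq_zero_of_eventually_eq_zero {c : ℕ → ℤ} {d : ℕ}
    (h : ∀ᶠ n in atTop, binomialSum c d n = 0) : ∀ i ≤ d, c i = 0 := by
  have hzero := coeff_zero_eq_zero_of_eventually_eq_zero h
  induction d generalizing c with
  | zero => simpa using hzero
  | succ d ih =>
    have hsucc : ∀ᶠ n in atTop, binomialSum (fun i => c (i + 1)) d n = 0 :=
      h.mono fun n hn => by rwa [binomialSum_succ, hzero, zero_mul, zero_add] at hn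
    rintro (_ | i) hi
    · exact hzero
    · exact ih hsucc (coeff_zero_eq_zero_of_eventually_eq_zero hsucc) i (Nat.le_of_succ_le_succ hi)

theorem coeff_eq_of_eventually_eq {c c' : ℕ → ℤ} {d : ℕ}
    (h : ∀ᶠ n in atTop, binomialSum c d n = binomialSum c' d n) {i : ℕ} (hi : i ≤ d) :
    c i = c' i := by
  refine sub_eq_zero.mp (coeff_eq_zero_of_eventually_eq_zero (c := c - c') (d := d) ?_ i hi)
  exact h.mono fun n hn => by rw [binomialSum_sub, hn, sub_self]

theorem multichoose_succ_eq_choose (d n : ℕ) : (d + 1).multichoose n = (n + d).choose d := by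
  rw [Nat.multichoose_eq, ← Nat.choose_symm_add]
  congr 1
  omega

theorem coeff_zero_eq_zero_of_le_multichoose {c : ℕ → ℤ} {d : ℕ} {s : ℕ → ℕ}
    (hs : ∀ᶠ n in atTop, (s n : ℤ) = binomialSum c (d + 1) n) {r C : ℕ}
    (hle : ∀ k, s (r + k) ≤ C * (d + 1).multichoose k) : c 0 = 0 := by
  refine coeff_zero_eq_zero_of_tendsto (d := d + 1) ?_
  have hupper := ((tendsto_choose_div_pow r d).const_mul (C : ℝ)).mul
    (tendsto_one_div_atTop_nhds_zero_nat (𝕜 := ℝ))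
  rw [mul_zero] at hupper
  refine squeeze_zero' (hs.mono fun n hn => ?_) ?_ hupper
  · rw [← hn]
    positivity
  filter_upwards [hs, eventually_ge_atTop r] with n hsn hn
  obtain ⟨k, rfl⟩ := Nat.exists_eq_add_of_le hn
  have hk := hle k
  rw [multichoose_succ_eq_choose] at hk
  rw [← mul_div_assoc (C : ℝ), div_mul_div_comm, mul_one, ← pow_succ, Nat.add_sub_cancel_left,
    ← hsn]
  gcongr
  exact_mod_cast hk

theorem exists_lt_multichoose_add_multichoose {c : ℕ → ℤ} (hc : c 0 < 2) {d : ℕ} {s : ℕ → ℕ}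
    (hs : ∀ᶠ n in atTop, (s n : ℤ) = binomialSum c d n) (a b : ℕ) :
    ∃ n, a ≤ n ∧ b ≤ n ∧ s n < (d + 1).multichoose (n - a) + (d + 1).multichoose (n - b) := by
  by_contra! hcon
  have hlower := (tendsto_choose_div_pow a d).add (tendsto_choose_div_pow b d)
  have hlim := le_of_tendsto_of_tendsto hlower (tendsto_binomialSum_div_pow c d) <| by
    filter_upwards [hs, eventually_ge_atTop a, eventually_ge_atTop b] with n hn ha hb
    have hle := hcon n ha hb
    rw [multichoose_succ_eq_choose, multichoose_succ_eq_choose] at hle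
    rw [← add_div, ← hn]
    gcongr
    exact_mod_cast hle
  rw [← two_mul] at hlim
  have hd : (0 : ℝ) < 1 / d.factorial := by positivity
  exact hc.not_ge (by exact_mod_cast le_of_mul_le_mul_right hlim hd)

end BinomialSums

section HilbertFunction

variable {A : Type*} [CommRing A] {l : List A} {I Q : Ideal A}

theorem relLength_ofList_pow_succ_top (hl : IsWeaklyRegular A l) (n : ℕ) :
    relLength (Ideal.ofList l ^ (n + 1)) ⊤ =
      relLength (Ideal.ofList l) ⊤ * ((l.length + 1).multichoose n : ℕ∞) := by
  induction n with
  | zero => simp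
  | succ n ih =>
    rw [relLength_add (Ideal.pow_le_pow_right n.succ.le_succ) le_top, ih,
      Nat.multichoose_succ_succ, Nat.cast_add, mul_add,
      ← relLength_ofList_pow_mul_eq hl le_rfl le_top, Ideal.mul_top, ← pow_succ]

theorem sallyLength_add_relLength_top (hl : IsWeaklyRegular A l) (hQI : Ideal.ofList l ≤ I)
    (n : ℕ) :
    sallyLength (Ideal.ofList l) I n + relLength (I ^ (n + 1)) ⊤ +
        relLength (Ideal.ofList l) I * (l.length.multichoose n : ℕ∞) =
      relLength (Ideal.ofList l) ⊤ * ((l.length + 1).multichoose n : ℕ∞) := by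
  have hle : Ideal.ofList l ^ n * I ≤ I ^ (n + 1) := by
    simpa only [pow_one] using pow_mul_pow_le hQI n 1
  rw [sallyLength, ← relLength_add hle le_top, ← relLength_ofList_pow_mul_eq hl le_rfl hQI,
    ← relLength_ofList_pow_succ_top hl, pow_succ, add_comm,
    ← relLength_add (Ideal.mul_mono_right hQI) le_top]

theorem pow_add_succ_eq_pow_mul {r : ℕ} (hred : I ^ (r + 1) = Q * I ^ r) (k : ℕ) :
    I ^ (r + k + 1) = Q ^ k * I ^ (r + 1) := by
  induction k with
  | zero => simp
  | succ k ih =>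
    calc I ^ (r + (k + 1) + 1)
      _ = Q ^ k * I * I ^ (r + 1) := by rw [← add_assoc, pow_succ, ih]; ring
      _ = Q ^ (k + 1) * I ^ (r + 1) := by nth_rw 1 [hred]; ring

theorem sallyLength_add_le_mul_multichoose (hQI : Ideal.ofList l ≤ I) {r : ℕ}
    (hred : I ^ (r + 1) = Ideal.ofList l * I ^ r) (k : ℕ) :
    sallyLength (Ideal.ofList l) I (r + k) ≤
      sallyLength (Ideal.ofList l) I r * (l.length.multichoose k : ℕ∞) := by
  rw [sallyLength, pow_add_succ_eq_pow_mul hred, add_comm r k, pow_add, mul_assoc]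
  refine relLength_ofList_pow_mul_le ?_ l k
  simpa only [pow_one] using pow_mul_pow_le hQI r 1

end HilbertFunction

section HilbertCoefficients

open Filter

variable {d b q r C : ℕ} {s H : ℕ → ℕ} {E : ℕ → ℤ}

theorem eventually_eq_binomialSum_of_add_eq
    (hs : ∀ n, s n + H n + b * (d + 1).multichoose n = q * (d + 2).multichoose n)
    (hH : ∀ᶠ n in atTop, (H n : ℤ) = binomialSum E (d + 1) n) :
    ∀ᶠ n in atTop, (s n : ℤ) =
      binomialSum (Pi.single 0 (q : ℤ) - Pi.single 1 (b : ℤ) - E) (d + 1) n := by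
  filter_upwards [hH] with n hn
  have hsn := hs n
  rw [multichoose_succ_eq_choose, multichoose_succ_eq_choose] at hsn
  rw [binomialSum_sub, binomialSum_single_sub_single, ← hn]
  zify at hsn
  linear_combination hsn

theorem natCast_eq_coeff_zero_of_le_multichoose
    (hs : ∀ n, s n + H n + b * (d + 1).multichoose n = q * (d + 2).multichoose n)
    (hH : ∀ᶠ n in atTop, (H n : ℤ) = binomialSum E (d + 1) n)
    (hle : ∀ k, s (r + k) ≤ C * (d + 1).multichoose k) : (q : ℤ) = E 0 := by
  have hzero := coeff_zero_eq_zero_of_le_multichoose (eventually_eq_binomialSum_of_add_eq hs hH) hle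
  simpa [sub_eq_zero] using hzero

theorem exists_lt_of_coeff_one_eq
    (hs : ∀ n, s n + H n + b * (d + 1).multichoose n = q * (d + 2).multichoose n)
    (hH : ∀ᶠ n in atTop, (H n : ℤ) = binomialSum E (d + 1) n)
    (hle : ∀ k, s (r + k) ≤ C * (d + 1).multichoose k) (hE : E 1 = -(b + 1)) (m n : ℕ) :
    ∃ k, m ≤ k ∧ n ≤ k ∧ s k < (d + 1).multichoose (k - m) + (d + 1).multichoose (k - n) := by
  have hsum := eventually_eq_binomialSum_of_add_eq hs hH
  have hzero := coeff_zero_eq_zero_of_le_multichoose hsum hle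
  refine exists_lt_multichoose_add_multichoose
    (c := fun i => (Pi.single 0 (q : ℤ) - Pi.single 1 (b : ℤ) - E : ℕ → ℤ) (i + 1))
    ?_ (hsum.mono fun k hk => ?_) m n
  · simp [hE]
  · rw [hk, binomialSum_succ, hzero, zero_mul, zero_add]

theorem eq_binomialSum_of_eq_multichoose {n : ℕ}
    (hs : s n + H n + b * (d + 1).multichoose n = q * (d + 2).multichoose n)
    (hsn : s n = (d + 1).multichoose n) :
    (H n : ℤ) = binomialSum (Pi.single 0 (q : ℤ) - Pi.single 1 (b + 1 : ℤ)) (d + 1) n := by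
  rw [hsn, multichoose_succ_eq_choose, multichoose_succ_eq_choose] at hs
  rw [binomialSum_single_sub_single]
  zify at hs
  linear_combination hs

variable {A : Type*} [CommRing A] {l : List A} {I : Ideal A}

theorem exists_natCast_eq_sallyLength (hl : IsWeaklyRegular A l) (hQI : Ideal.ofList l ≤ I)
    (hfin : relLength (Ideal.ofList l) ⊤ ≠ ⊤) (hH : ∀ n, relLength (I ^ (n + 1)) ⊤ = (H n : ℕ∞)) :
    ∃ (q b : ℕ) (s : ℕ → ℕ), b + H 0 = q ∧
      (∀ n, sallyLength (Ideal.ofList l) I n = (s n : ℕ∞)) ∧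
      ∀ n, s n + H n + b * l.length.multichoose n = q * (l.length + 1).multichoose n := by
  obtain ⟨q, hq⟩ := ENat.ne_top_iff_exists.mp hfin
  have hadd := relLength_add hQI le_top
  have htotal := sallyLength_add_relLength_top hl hQI
  rw [← hq] at hadd
  simp only [← hq, hH] at htotal
  obtain ⟨b, hb⟩ := ENat.ne_top_iff_exists.mp
    (ne_top_of_le_ne_top (ENat.natCast_ne_top q) (le_self_add.trans_eq hadd.symm))
  have hs : ∀ n, ∃ m : ℕ, sallyLength (Ideal.ofList l) I n = m := fun n => by
    obtain ⟨m, hm⟩ := ENat.ne_top_iff_exists.mp <| ne_top_of_le_ne_top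
      (ENat.natCast_ne_top (q * (l.length + 1).multichoose n))
      ((le_self_add.trans le_self_add).trans_eq ((htotal n).trans (Nat.cast_mul _ _).symm))
    exact ⟨m, hm.symm⟩
  choose s hs using hs
  refine ⟨q, b, s, ?_, hs, fun n => ?_⟩
  · have hzero := hH 0
    rw [zero_add, pow_one] at hzero
    rw [hzero, ← hb] at hadd
    exact_mod_cast hadd.symm
  · have hn := htotal n
    rw [hs, ← hb] at hn
    exact_mod_cast hn

theorem hilbertFunction_eq_binomialSum (hl : IsWeaklyRegular A l) (hd : l.length = d + 1)
    (hQI : Ideal.ofList l ≤ I) (hred : I ^ (r + 1) = Ideal.ofList l * I ^ r)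
    (hH : ∀ n, relLength (I ^ (n + 1)) ⊤ = (H n : ℕ∞))
    (hHS : ∀ᶠ n in atTop, (H n : ℤ) = binomialSum E (d + 1) n)
    (hE : E 1 = H 0 - E 0 - 1) (hone : sallyLength (Ideal.ofList l) I 1 = l.length) (n : ℕ) :
    (H (n + 1) : ℤ) = binomialSum (Pi.single 0 (E 0) - Pi.single 1 (-E 1)) (d + 1) (n + 1) := by
  have hfin : relLength (Ideal.ofList l) ⊤ ≠ ⊤ :=
    ne_top_of_le_ne_top (ENat.natCast_ne_top (H r)) <| hH r ▸
      relLength_anti_left (inf_le_right.trans (hred.le.trans Ideal.mul_le_left))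
  obtain ⟨q, b, s, hbq, hs, htotal⟩ := exists_natCast_eq_sallyLength hl hQI hfin hH
  rw [hd] at htotal
  have hle : ∀ k, s (r + k) ≤ s r * (d + 1).multichoose k := fun k => by
    have hk := sallyLength_add_le_mul_multichoose hQI hred k
    rw [hs, hs, hd] at hk
    exact_mod_cast hk
  have hq : (q : ℤ) = E 0 := natCast_eq_coeff_zero_of_le_multichoose htotal hHS hle
  have hb : -E 1 = b + 1 := by
    zify at hbq
    linear_combination -hE - hbq - hq
  have hrank : SallyRankLeOne l.length (Ideal.ofList l) I := fun m n => by
    obtain ⟨k, hm, hn, hk⟩ := exists_lt_of_coeff_one_eq htotal hHS hle (by rw [← hb, neg_neg]) m n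
    refine ⟨k, hm, hn, ?_⟩
    rw [hs, hd]
    exact_mod_cast hk
  have hsn := sallyLength_succ_eq_multichoose hl (by omega) hQI hfin hrank hone n
  rw [hs, hd, Nat.cast_inj] at hsn
  rw [← hq, hb]
  exact eq_binomialSum_of_eq_multichoose (htotal (n + 1)) hsn

end HilbertCoefficients

theorem natCast_eq_length_of_moduleLength_eq {A M : Type*} [CommRing A] [AddCommGroup M]
    [Module A M] {n : ℕ} (h : moduleLength A M = (n : ℕ∞)) : Module.length A M = n := by
  rw [moduleLength, ← Module.coe_length] at h
  exact_mod_cast h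

theorem main_theorem_iv_general (A : Type*) [CommRing A] (d : ℕ) (hd : 0 < d)
    (I Q : Ideal A) (a : Fin d → A) (ha : IsWeaklyRegular A (List.ofFn a))
    (hQ : Q = Ideal.span (Set.range a)) (hQI : Q ≤ I)
    (hred : ∃ r : ℕ, I ^ (r + 1) = Q * I ^ r)
    (H : ℕ → ℕ)
    (hH : ∀ n : ℕ, moduleLength A (A ⧸ I ^ (n + 1)) = (H n : ℕ∞))
    (e : ℕ → ℤ) (N : ℕ)
    (hHS : ∀ n ≥ N, (H n : ℤ) =
      ∑ i ∈ Finset.range (d + 1),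
        (-1) ^ i * e i * ((n + d - i).choose (d - i) : ℤ))
    (he : e 1 = e 0 - (H 0 : ℤ) + 1)
    (hc : moduleLength A
      (↥(I ^ 2) ⧸ Submodule.comap (I ^ 2).subtype (Q * I)) = (d : ℕ∞)) :
    (∀ n : ℕ, 1 ≤ n → (H n : ℤ) =
      e 0 * ((n + d).choose d : ℤ) - e 1 * ((n + d - 1).choose (d - 1) : ℤ)) ∧
    ∀ i : ℕ, 2 ≤ i → i ≤ d → e i = 0 := by
  obtain ⟨d, rfl⟩ := Nat.exists_eq_add_one.mpr hd
  rw [← ofList_ofFn] at hQ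
  subst hQ
  obtain ⟨r, hr⟩ := hred
  let E : ℕ → ℤ := fun i => (-1) ^ i * e i
  have hone : sallyLength (Ideal.ofList (List.ofFn a)) I 1 = (List.ofFn a).length := by
    rw [sallyLength, pow_one, List.length_ofFn]
    exact natCast_eq_length_of_moduleLength_eq hc
  have hHE : ∀ᶠ n in Filter.atTop, (H n : ℤ) = binomialSum E (d + 1) n :=
    Filter.eventually_atTop.mpr ⟨N, hHS⟩
  have hmain := hilbertFunction_eq_binomialSum ha List.length_ofFn hQI hr
    (fun n => (relLength_top _).trans (natCast_eq_length_of_moduleLength_eq (hH n))) hHE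
    (by simp only [E]; linear_combination -he) hone
  refine ⟨fun n hn => ?_, fun i hi hid => ?_⟩
  · obtain ⟨n, rfl⟩ := Nat.exists_eq_add_one.mpr hn
    rw [hmain, binomialSum_single_sub_single]
    simp [E, ← add_assoc]
  · have hcoeff : E i = (Pi.single 0 (E 0) - Pi.single 1 (-E 1) : ℕ → ℤ) i := by
      refine coeff_eq_of_eventually_eq (d := d + 1) ?_ hid
      filter_upwards [hHE, Filter.eventually_ge_atTop 1] with n hn hn_pos
      obtain ⟨n, rfl⟩ := Nat.exists_eq_add_one.mpr hn_pos
      rw [← hn, hmain]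
    have hi_zero : i ≠ 0 := by omega
    have hi_one : i ≠ 1 := by omega
    simpa [E, Pi.single_apply, hi_zero, hi_one] using hcoeff

/-- Main theorem, assertion (iv): if `e₁ = e₀ - ℓ_A(A/I) + 1` and `ℓ_A(I²/QI) = d`,
then `ℓ_A(A/I^{n+1}) = e₀·C(n+d,d) - e₁·C(n+d-1,d-1)` for all `n ≥ 1`, and `eᵢ = 0`
for all `2 ≤ i ≤ d`.  Here `H n = ℓ_A(A/I^{n+1})` (so `H 0 = ℓ_A(A/I)`). -/
theorem main_theorem_iv (A : Type*) [CommRing A] [IsLocalRing A] [IsNoetherianRing A]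
    [Infinite (ResidueField A)]
    (d : ℕ) (hd : 0 < d) (hCM : IsCohenMacaulayLocal A d)
    (I Q : Ideal A) (hI : IsPrimaryToMax A I)
    (a : Fin d → A) (hQ : Q = Ideal.span (Set.range a)) (hQI : Q ≤ I)
    (hred : ∃ r : ℕ, I ^ (r + 1) = Q * I ^ r)
    (H : ℕ → ℕ)
    (hH : ∀ n : ℕ, moduleLength A (A ⧸ I ^ (n + 1)) = (H n : ℕ∞))
    (e : ℕ → ℤ) (N : ℕ)
    (hHS : ∀ n ≥ N, (H n : ℤ) =
      ∑ i ∈ Finset.range (d + 1),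
        (-1) ^ i * e i * ((n + d - i).choose (d - i) : ℤ))
    (he : e 1 = e 0 - (H 0 : ℤ) + 1)
    (hc : moduleLength A
      (↥(I ^ 2) ⧸ Submodule.comap (I ^ 2).subtype (Q * I)) = (d : ℕ∞)) :
    (∀ n : ℕ, 1 ≤ n → (H n : ℤ) =
      e 0 * ((n + d).choose d : ℤ) - e 1 * ((n + d - 1).choose (d - 1) : ℤ)) ∧
    ∀ i : ℕ, 2 ≤ i → i ≤ d → e i = 0 := by
  obtain ⟨r, hr⟩ := hred
  have ha := isWeaklyRegular_ofFn_of_isCohenMacaulayLocal hCM (hQ ▸ hI.of_reduction hQI hr)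
  exact main_theorem_iv_general A d hd I Q a ha hQ hQI ⟨r, hr⟩ H hH e N hHS he hc
end

section
/- Let $A_0$ be a Cohen-Macaulay local ring with maximal ideal $\mathfrak{m}_0$, $I_0$ an $\mathfrak{m}_0$-primary ideal with minimal reduction $Q_0$, and let $A = A_0[[X_1,\dots,X_n]]$ be a formal power series ring with maximal ideal $\mathfrak{m} = \mathfrak{m}_0 A + (X_1,\dots,X_n)$. Put $I = I_0 A + (X_1,\dots,X_n)A$ and $Q = Q_0 A + (X_1,\dots,X_n)A$. Then $Q$ is a reduction of $I$, $e_0(I) = e_0(I_0)$, $e_1(I) = e_1(I_0)$, and $I^2/QI \cong I_0^2/Q_0 I_0$ as modules; in particular $\ell_A(I^2/QI) = \ell_{A_0}(I_0^2/Q_0 I_0)$. -/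
/-!
Let `R → S → R` be an algebra with a retraction `π` and let `K` be the kernel of `π`. The extended
ideal `J = IS + K` is the preimage of `I`, and every `f ∈ J ^ (k + 1)` is congruent to the scalar
`π f` modulo `K * J ^ k`. This ideal lies in `(QS + K) * J ^ k` for every `Q`, so whether
`f ∈ J ^ (k + 1)` belongs to `(QS + K) * J ^ k` depends on `π f` alone. This gives both the
reduction and the isomorphism between `J² / (QS + K)J` and `I² / QI`.

For one variable, `K = (X)` with `X` regular, the same congruence gives `J ^ (k + 1) : X = J ^ k`,
and the exact sequence `0 → S / J ^ k → S / J ^ (k + 1) → R / I ^ (k + 1) → 0` shows that the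
Hilbert function of `J` is the summatory function of that of `I`. For `n` variables this is
iterated `n` times. Summation raises the degree of a Hilbert polynomial by one and keeps its
coefficients `e i`, which are determined by the values at large integers.
-/

open IsLocalRing

open Filter

section SemilinearQuotient

variable {R S M N : Type*} [CommRing R] [CommRing S] [AddCommGroup M] [Module S M]
  [AddCommGroup N] [Module R N] {φ : S →+* R} [RingHomSurjective φ]

theorem mapQ_bijective_of_eq_comap {p : Submodule S M} {q : Submodule R N} {f : M →ₛₗ[φ] N}
    (hf : Function.Surjective f) (h : p = q.comap f) :
    Function.Bijective (p.mapQ q f h.le) := by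
  subst h
  refine ⟨LinearMap.ker_eq_bot.mp ?_, ?_⟩
  · rw [Submodule.ker_mapQ, Submodule.mkQ_map_self]
  · rw [← LinearMap.range_eq_top, Submodule.range_mapQ, LinearMap.range_eq_top.mpr hf,
      Submodule.map_top, Submodule.range_mkQ]

theorem moduleLength_eq_of_bijective (f : M →ₛₗ[φ] N) (hf : Function.Bijective f) :
    moduleLength S M = moduleLength R N :=
  Order.krullDim_eq_of_orderIso (Submodule.orderIsoMapComapOfBijective f hf)

theorem coe_length_eq_moduleLength (R M : Type*) [CommRing R] [AddCommGroup M] [Module R M] :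
    (Module.length R M : WithBot ℕ∞) = moduleLength R M :=
  Module.coe_length R M

theorem length_quotient_comap (I : Ideal R) :
    Module.length S (S ⧸ I.comap φ) = Module.length R (R ⧸ I) := by
  apply WithBot.coe_injective
  rw [coe_length_eq_moduleLength, coe_length_eq_moduleLength]
  exact moduleLength_eq_of_bijective _
    (mapQ_bijective_of_eq_comap (f := φ.toSemilinearMap) RingHomSurjective.is_surjective rfl)

end SemilinearQuotient

theorem length_quotient_comap_pow_of_ringEquiv {S T : Type*} [CommRing S] [CommRing T]
    (e : S ≃+* T) (J : Ideal T) (k : ℕ) :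
    Module.length S (S ⧸ J.comap e ^ k) = Module.length T (T ⧸ J ^ k) := by
  rw [← Ideal.map_symm, ← Ideal.map_pow, Ideal.map_symm]
  have : RingHomSurjective (e : S →+* T) := ⟨e.surjective⟩
  exact length_quotient_comap (φ := (e : S →+* T)) (J ^ k)

theorem nonempty_restrictScalars_linearEquiv_of_bijective {R S M N : Type*} [CommRing R]
    [CommRing S] [Algebra R S] [AddCommGroup M] [Module S M] [AddCommGroup N] [Module R N]
    {π : S →+* R} (hπ : Function.LeftInverse π (algebraMap R S)) (f : M →ₛₗ[π] N)
    (hf : Function.Bijective f) : Nonempty (RestrictScalars R S M ≃ₗ[R] N) :=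
  ⟨LinearEquiv.ofBijective
    { toFun x := f (RestrictScalars.addEquiv R S M x)
      map_add' := by simp
      map_smul' r x := by simp [hπ r] }
    (hf.comp (RestrictScalars.addEquiv R S M).bijective)⟩

theorem length_quotient_eq_add_of_mul_mem_iff {S : Type*} [CommRing S] {K L : Ideal S} {x : S}
    (h : ∀ f, x * f ∈ L ↔ f ∈ K) :
    Module.length S (S ⧸ L) =
      Module.length S (S ⧸ K) + Module.length S (S ⧸ L ⊔ Ideal.span {x}) := by
  have hK : K = Submodule.comap (LinearMap.mulLeft S x) L := by
    ext f
    exact (h f).symm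
  refine Module.length_eq_add_of_exact (Submodule.mapQ K L (LinearMap.mulLeft S x) hK.le)
    (Submodule.factor le_sup_left) (LinearMap.ker_eq_bot.mp ?_) (Submodule.factor_surjective _)
    (LinearMap.exact_iff.mpr ?_)
  · rw [Submodule.ker_mapQ, ← hK, Submodule.mkQ_map_self]
  · have hrange : LinearMap.range (LinearMap.mulLeft S x) = Ideal.span {x} := by
      ext f
      simp [Ideal.mem_span_singleton', mul_comm x]
    rw [Submodule.range_mapQ, hrange, Submodule.factor, Submodule.ker_mapQ, Submodule.comap_id,
      Submodule.map_sup, Submodule.mkQ_map_self, bot_sup_eq]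

section Retraction

variable {R S : Type*} [CommRing R] [CommRing S] [Algebra R S] {π : S →+* R}
  (hπ : Function.LeftInverse π (algebraMap R S))

include hπ

theorem sub_algebraMap_mem_ker (f : S) : f - algebraMap R S (π f) ∈ RingHom.ker π := by
  rw [RingHom.mem_ker, map_sub, hπ, sub_self]

theorem comap_eq_map_sup_ker (I : Ideal R) :
    I.comap π = I.map (algebraMap R S) ⊔ RingHom.ker π := by
  refine le_antisymm (fun f hf ↦ ?_) (sup_le (Ideal.map_le_iff_le_comap.mpr fun a ha ↦ ?_) ?_)
  · rw [← add_sub_cancel (algebraMap R S (π f)) f]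
    exact Submodule.add_mem_sup (Ideal.mem_map_of_mem _ hf) (sub_algebraMap_mem_ker hπ f)
  · rwa [Ideal.mem_comap, Ideal.mem_comap, hπ]
  · exact Ideal.comap_mono bot_le

theorem algebraMap_mem_comap_mul_comap_pow {Q I : Ideal R} {k : ℕ} {a : R} (ha : a ∈ Q * I ^ k) :
    algebraMap R S a ∈ Q.comap π * I.comap π ^ k := by
  have hle (L : Ideal R) : L.map (algebraMap R S) ≤ L.comap π :=
    (comap_eq_map_sup_ker hπ L).ge.trans' le_sup_left
  refine Ideal.mul_mono (hle Q) (Ideal.pow_right_mono (hle I) k) ?_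
  rw [← Ideal.map_pow, ← Ideal.map_mul]
  exact Ideal.mem_map_of_mem _ ha

theorem algebraMap_mem_comap_pow {I : Ideal R} {k : ℕ} {a : R} (ha : a ∈ I ^ k) :
    algebraMap R S a ∈ I.comap π ^ k := by
  simpa using algebraMap_mem_comap_mul_comap_pow hπ (Q := ⊤) (by simpa using ha)

theorem sub_algebraMap_mem_ker_mul_comap_pow {I : Ideal R} {k : ℕ} {f : S}
    (hf : f ∈ I.comap π ^ (k + 1)) :
    f - algebraMap R S (π f) ∈ RingHom.ker π * I.comap π ^ k := by
  induction k generalizing f with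
  | zero => simpa using sub_algebraMap_mem_ker hπ f
  | succ k ih =>
    rw [pow_succ] at hf
    induction hf using Submodule.mul_induction_on' with
    | mem_mul_mem f hf g hg =>
      have hπf : π f ∈ I ^ (k + 1) := Ideal.le_comap_pow π _ hf
      have hfg : (f - algebraMap R S (π f)) * g ∈ RingHom.ker π * I.comap π ^ (k + 1) := by
        rw [pow_succ, ← mul_assoc]
        exact Ideal.mul_mem_mul (ih hf) hg
      have hgf : (g - algebraMap R S (π g)) * algebraMap R S (π f) ∈
          RingHom.ker π * I.comap π ^ (k + 1) :=
        Ideal.mul_mem_mul (sub_algebraMap_mem_ker hπ g) (algebraMap_mem_comap_pow hπ hπf)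
      convert add_mem hfg hgf using 1
      rw [map_mul, map_mul]
      ring
    | add f _ g _ hf hg =>
      rw [map_add, map_add, add_sub_add_comm]
      exact add_mem hf hg

theorem mem_comap_mul_comap_pow_iff {Q I : Ideal R} {k : ℕ} {f : S}
    (hf : f ∈ I.comap π ^ (k + 1)) :
    f ∈ Q.comap π * I.comap π ^ k ↔ π f ∈ Q * I ^ k := by
  refine ⟨fun h ↦ ?_, fun h ↦ ?_⟩
  · have hle : Q.comap π * I.comap π ^ k ≤ (Q * I ^ k).comap π :=
      (Ideal.mul_mono_right (Ideal.le_comap_pow π k)).trans (Ideal.le_comap_mul π)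
    exact hle h
  · rw [← add_sub_cancel (algebraMap R S (π f)) f]
    exact add_mem (algebraMap_mem_comap_mul_comap_pow hπ h)
      (Ideal.mul_mono_left (Ideal.comap_mono bot_le) (sub_algebraMap_mem_ker_mul_comap_pow hπ hf))

theorem comap_pow_succ_eq_of_pow_succ_eq {Q I : Ideal R} (hQI : Q ≤ I) {r : ℕ}
    (hr : I ^ (r + 1) = Q * I ^ r) :
    I.comap π ^ (r + 1) = Q.comap π * I.comap π ^ r := by
  refine le_antisymm (fun f hf ↦ ?_) ?_
  · rw [mem_comap_mul_comap_pow_iff hπ hf, ← hr]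
    exact Ideal.le_comap_pow π _ hf
  · rw [pow_succ']
    exact Ideal.mul_mono_left (Ideal.comap_mono hQI)

theorem exists_bijective_comap_pow_quotient (Q I : Ideal R) (k : ℕ) :
    ∃ F : (↥(I.comap π ^ (k + 1)) ⧸
          Submodule.comap (I.comap π ^ (k + 1)).subtype (Q.comap π * I.comap π ^ k)) →ₛₗ[π]
        (↥(I ^ (k + 1)) ⧸ Submodule.comap (I ^ (k + 1)).subtype (Q * I ^ k)),
      Function.Bijective F := by
  have : RingHomSurjective π := ⟨hπ.surjective⟩
  let f : ↥(I.comap π ^ (k + 1)) →ₛₗ[π] ↥(I ^ (k + 1)) :=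
    { toFun x := ⟨π x, Ideal.le_comap_pow π _ x.2⟩
      map_add' x y := Subtype.ext (map_add π _ _)
      map_smul' s x := Subtype.ext (map_mul π _ _) }
  have hf : Function.Surjective f := fun a ↦
    ⟨⟨algebraMap R S a, algebraMap_mem_comap_pow hπ a.2⟩, Subtype.ext (hπ a)⟩
  refine ⟨_, mapQ_bijective_of_eq_comap hf ?_⟩
  ext x
  exact mem_comap_mul_comap_pow_iff hπ x.2

theorem mul_mem_comap_pow_succ_iff {I : Ideal R} {x : S} (hx : IsLeftRegular x)
    (hker : RingHom.ker π = Ideal.span {x}) {k : ℕ} {f : S} :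
    x * f ∈ I.comap π ^ (k + 1) ↔ f ∈ I.comap π ^ k := by
  have hxker : x ∈ RingHom.ker π := hker ▸ Ideal.mem_span_singleton_self x
  refine ⟨fun h ↦ ?_, fun h ↦ ?_⟩
  · have hxf := sub_algebraMap_mem_ker_mul_comap_pow hπ h
    rw [map_mul, RingHom.mem_ker.mp hxker, zero_mul, map_zero, sub_zero, hker,
      Ideal.mem_span_singleton_mul] at hxf
    obtain ⟨g, hg, hgf⟩ := hxf
    rwa [← hx hgf]
  · rw [pow_succ']
    exact Ideal.mul_mem_mul (Ideal.comap_mono bot_le hxker) h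

theorem comap_pow_sup_ker (I : Ideal R) (k : ℕ) :
    I.comap π ^ k ⊔ RingHom.ker π = (I ^ k).comap π := by
  refine le_antisymm (sup_le (Ideal.le_comap_pow π k) (Ideal.comap_mono bot_le)) fun f hf ↦ ?_
  rw [← add_sub_cancel (algebraMap R S (π f)) f]
  exact Submodule.add_mem_sup (algebraMap_mem_comap_pow hπ hf) (sub_algebraMap_mem_ker hπ f)

theorem length_quotient_comap_pow_succ (I : Ideal R) {x : S} (hx : IsLeftRegular x)
    (hker : RingHom.ker π = Ideal.span {x}) (k : ℕ) :
    Module.length S (S ⧸ I.comap π ^ (k + 1)) =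
      Module.length S (S ⧸ I.comap π ^ k) + Module.length R (R ⧸ I ^ (k + 1)) := by
  have : RingHomSurjective π := ⟨hπ.surjective⟩
  rw [length_quotient_eq_add_of_mul_mem_iff fun f ↦ mul_mem_comap_pow_succ_iff hπ hx hker,
    ← hker, comap_pow_sup_ker hπ, length_quotient_comap]

end Retraction

/-- The summatory function `k ↦ f 0 + ⋯ + f k`; the last term is included, so that a Hilbert
function `k ↦ ℓ(A ⧸ I ^ (k + 1))` is summed from `ℓ(A ⧸ I)` on. -/
def cumulativeSum {M : Type*} [AddCommMonoid M] (f : ℕ → M) (k : ℕ) : M :=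
  ∑ j ∈ Finset.range (k + 1), f j

theorem cumulativeSum_succ {M : Type*} [AddCommMonoid M] (f : ℕ → M) (k : ℕ) :
    cumulativeSum f (k + 1) = cumulativeSum f k + f (k + 1) :=
  Finset.sum_range_succ f (k + 1)

theorem map_iterate_cumulativeSum {M N : Type*} [AddCommMonoid M] [AddCommMonoid N] (φ : M →+ N)
    (n : ℕ) (f : ℕ → M) : φ ∘ cumulativeSum^[n] f = cumulativeSum^[n] (φ ∘ f) := by
  have h : Function.Semiconj (φ ∘ · : (ℕ → M) → ℕ → N) cumulativeSum cumulativeSum :=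
    fun f ↦ funext fun k ↦ map_sum φ f _
  exact (h.iterate_right n).eq f

theorem length_quotient_comap_pow_eq_cumulativeSum {R S : Type*} [CommRing R] [CommRing S]
    [Algebra R S] {π : S →+* R} (hπ : Function.LeftInverse π (algebraMap R S)) (I : Ideal R)
    {x : S} (hx : IsLeftRegular x) (hker : RingHom.ker π = Ideal.span {x}) (k : ℕ) :
    Module.length S (S ⧸ I.comap π ^ (k + 1)) =
      cumulativeSum (fun j ↦ Module.length R (R ⧸ I ^ (j + 1))) k := by
  induction k with
  | zero => simp [length_quotient_comap_pow_succ hπ I hx hker, cumulativeSum,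
      Module.length_eq_zero]
  | succ k ih => rw [length_quotient_comap_pow_succ hπ I hx hker, ih, cumulativeSum_succ]

section PowerSeries

variable {R : Type*} [CommRing R]

theorem powerSeries_ker_constantCoeff :
    RingHom.ker (PowerSeries.constantCoeff (R := R)) = Ideal.span {PowerSeries.X} := by
  ext f
  rw [RingHom.mem_ker, Ideal.mem_span_singleton, PowerSeries.X_dvd_iff]

theorem powerSeries_constantCoeff_leftInverse :
    Function.LeftInverse PowerSeries.constantCoeff (algebraMap R (PowerSeries R)) :=
  PowerSeries.constantCoeff_C

theorem mvPowerSeries_constantCoeff_leftInverse (σ : Type*) :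
    Function.LeftInverse MvPowerSeries.constantCoeff (algebraMap R (MvPowerSeries σ R)) :=
  MvPowerSeries.constantCoeff_C

theorem mem_span_X_of_coeff_eq_zero {σ : Type*} (s : Finset σ) {f : MvPowerSeries σ R}
    (hf : ∀ d : σ →₀ ℕ, (∀ i ∈ s, d i = 0) → MvPowerSeries.coeff d f = 0) :
    f ∈ Ideal.span (MvPowerSeries.X '' (s : Set σ)) := by
  classical
  induction s using Finset.induction_on generalizing f with
  | empty =>
    obtain rfl : f = 0 := MvPowerSeries.ext fun d ↦ hf d (by simp)
    exact zero_mem _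
  | insert i s _ ih =>
    let g : MvPowerSeries σ R := fun d ↦ if d i = 0 then MvPowerSeries.coeff d f else 0
    have coeff_g (d : σ →₀ ℕ) :
        MvPowerSeries.coeff d g = if d i = 0 then MvPowerSeries.coeff d f else 0 := rfl
    have hg : g ∈ Ideal.span (MvPowerSeries.X '' (s : Set σ)) := ih fun d hd ↦ by
      rw [coeff_g, ite_eq_right_iff]
      exact fun hi ↦ hf d ((Finset.forall_mem_insert _ _ _).mpr ⟨hi, hd⟩)
    have hfg : MvPowerSeries.X i ∣ f - g := MvPowerSeries.X_dvd_iff.mpr fun d hd ↦ by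
      rw [map_sub, coeff_g, if_pos hd, sub_self]
    rw [← sub_add_cancel f g, Finset.coe_insert, Set.image_insert_eq, Ideal.span_insert]
    exact Submodule.add_mem_sup (Ideal.mem_span_singleton.mpr hfg) hg

theorem mvPowerSeries_ker_constantCoeff (σ : Type*) [Finite σ] :
    RingHom.ker (MvPowerSeries.constantCoeff (σ := σ) (R := R)) =
      Ideal.span (Set.range MvPowerSeries.X) := by
  have := Fintype.ofFinite σ
  refine le_antisymm (fun f hf ↦ ?_) (Ideal.span_le.mpr ?_)
  · rw [← Set.image_univ, ← Finset.coe_univ]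
    refine mem_span_X_of_coeff_eq_zero _ fun d hd ↦ ?_
    obtain rfl : d = 0 := Finsupp.ext fun i ↦ hd i (Finset.mem_univ i)
    exact hf
  · rintro _ ⟨i, rfl⟩
    exact MvPowerSeries.constantCoeff_X i

theorem mvPowerSeries_comap_constantCoeff (σ : Type*) [Finite σ] (I : Ideal R) :
    I.comap (MvPowerSeries.constantCoeff (σ := σ)) =
      I.map (algebraMap R (MvPowerSeries σ R)) ⊔ Ideal.span (Set.range MvPowerSeries.X) := by
  rw [comap_eq_map_sup_ker (mvPowerSeries_constantCoeff_leftInverse σ),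
    mvPowerSeries_ker_constantCoeff]

theorem constantCoeff_constantCoeff_finSuccEquiv {n : ℕ} (f : MvPowerSeries (Fin (n + 1)) R) :
    MvPowerSeries.constantCoeff (PowerSeries.constantCoeff (MvPowerSeries.finSuccEquiv R n f)) =
      MvPowerSeries.constantCoeff f := by
  simpa using MvPowerSeries.coeff_coeff_finSuccEquiv f (k := 0) (x := 0)

theorem length_quotient_comap_constantCoeff_pow (I : Ideal R) (n : ℕ) :
    (fun k ↦ Module.length (MvPowerSeries (Fin n) R)
        (MvPowerSeries (Fin n) R ⧸ I.comap MvPowerSeries.constantCoeff ^ (k + 1))) =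
      cumulativeSum^[n] fun k ↦ Module.length R (R ⧸ I ^ (k + 1)) := by
  induction n with
  | zero =>
    funext k
    exact length_quotient_comap_pow_of_ringEquiv
      (MvPowerSeries.isEmptyEquiv (Fin 0) R).toRingEquiv I (k + 1)
  | succ n ih =>
    have hcomap : I.comap (MvPowerSeries.constantCoeff (σ := Fin (n + 1))) =
        ((I.comap (MvPowerSeries.constantCoeff (σ := Fin n))).comap
          PowerSeries.constantCoeff).comap (MvPowerSeries.finSuccEquiv R n).toRingEquiv := by
      ext f
      change _ ↔ MvPowerSeries.constantCoeff
        (PowerSeries.constantCoeff (MvPowerSeries.finSuccEquiv R n f)) ∈ I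
      rw [constantCoeff_constantCoeff_finSuccEquiv, Ideal.mem_comap]
    funext k
    rw [hcomap, length_quotient_comap_pow_of_ringEquiv, Function.iterate_succ_apply', ← ih]
    exact length_quotient_comap_pow_eq_cumulativeSum (R := MvPowerSeries (Fin n) R)
      (S := PowerSeries (MvPowerSeries (Fin n) R)) powerSeries_constantCoeff_leftInverse _
      PowerSeries.X_mul_injective powerSeries_ker_constantCoeff k

end PowerSeries

section HilbertSum

variable {R : Type*} [CommRing R]

/-- The value at `m` of the Hilbert polynomial of degree `d` with Hilbert coefficients `e`, signed
as in `∑ (-1) ^ i * e i * (m + d - i).choose (d - i)`. Only `e 0, …, e d` matter. -/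
def hilbertSum (e : ℕ → R) (d m : ℕ) : R :=
  ∑ i ∈ Finset.range (d + 1), (-1) ^ i * e i * ((m + d - i).choose (d - i) : R)

theorem hilbertSum_succ (e : ℕ → R) (d m : ℕ) :
    hilbertSum e (d + 1) m =
      cumulativeSum (hilbertSum e d) m + (-1) ^ (d + 1) * e (d + 1) := by
  have hockey_stick (i : ℕ) (hi : i ∈ Finset.range (d + 1)) :
      ((m + (d + 1) - i).choose (d + 1 - i) : R) =
        ∑ j ∈ Finset.range (m + 1), ((j + d - i).choose (d - i) : R) := by
    obtain ⟨c, rfl⟩ := Nat.exists_eq_add_of_le (Finset.mem_range_succ_iff.mp hi)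
    have hterm (j : ℕ) : j + (i + c) - i = j + c := by omega
    have htop : m + (i + c + 1) - i = m + c + 1 := by omega
    have hbot : i + c + 1 - i = c + 1 := by omega
    simp only [hterm, htop, hbot, Nat.add_sub_cancel_left, ← Nat.cast_sum,
      Nat.sum_range_add_choose]
  unfold cumulativeSum hilbertSum
  rw [Finset.sum_range_succ, Finset.sum_comm]
  simp only [Nat.sub_self, Nat.choose_zero_right, Nat.cast_one, mul_one]
  congr 1
  refine Finset.sum_congr rfl fun i hi ↦ ?_
  rw [hockey_stick i hi, Finset.mul_sum]

theorem hilbertSum_congr {e e' : ℕ → R} {d : ℕ} (h : ∀ i ≤ d, e i = e' i) :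
    hilbertSum e d = hilbertSum e' d :=
  funext fun _ ↦ Finset.sum_congr rfl fun i hi ↦ by rw [h i (Finset.mem_range_succ_iff.mp hi)]

theorem eventuallyEq_of_cumulativeSum_add_const {M : Type*} [AddCommGroup M] {f g : ℕ → M}
    {a b : M} (h : (fun m ↦ cumulativeSum f m + a) =ᶠ[atTop] fun m ↦ cumulativeSum g m + b) :
    f =ᶠ[atTop] g := by
  obtain ⟨N, hN⟩ := eventually_atTop.mp h
  filter_upwards [eventually_ge_atTop (N + 1)] with m hm
  obtain ⟨m, rfl⟩ := Nat.exists_eq_add_of_le' (Nat.one_le_of_lt hm)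
  have hsucc : cumulativeSum f (m + 1) + a = cumulativeSum g (m + 1) + b := hN (m + 1) (by omega)
  have hself : cumulativeSum f m + a = cumulativeSum g m + b := hN m (by omega)
  rw [cumulativeSum_succ, cumulativeSum_succ, add_right_comm, hself, add_right_comm] at hsucc
  exact add_left_cancel (add_right_cancel hsucc)

theorem eventuallyEq_hilbertSum_of_iterate_cumulativeSum {f e : ℕ → R} {d : ℕ} (n : ℕ)
    (h : cumulativeSum^[n] f =ᶠ[atTop] hilbertSum e (d + n)) : f =ᶠ[atTop] hilbertSum e d := by
  induction n with
  | zero => exact h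
  | succ n ih =>
    refine ih (eventuallyEq_of_cumulativeSum_add_const (a := 0)
      (b := (-1) ^ (d + n + 1) * e (d + n + 1)) ?_)
    filter_upwards [h] with m hm
    rw [add_zero, ← hilbertSum_succ, ← Function.iterate_succ_apply' cumulativeSum, hm, add_assoc]

theorem eq_of_hilbertSum_eventuallyEq {e e' : ℕ → R} {d : ℕ}
    (h : hilbertSum e d =ᶠ[atTop] hilbertSum e' d) : ∀ i ≤ d, e i = e' i := by
  induction d with
  | zero =>
    obtain ⟨m, hm⟩ := h.exists
    simpa [hilbertSum] using hm
  | succ d ih =>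
    have hlow : ∀ i ≤ d, e i = e' i := by
      simp only [EventuallyEq, hilbertSum_succ] at h
      exact ih (eventuallyEq_of_cumulativeSum_add_const h)
    have htop : e (d + 1) = e' (d + 1) := by
      obtain ⟨m, hm⟩ := h.exists
      rw [hilbertSum_succ, hilbertSum_succ, hilbertSum_congr hlow] at hm
      exact (isUnit_neg_one.pow (d + 1)).mul_left_cancel (add_left_cancel hm)
    exact fun i hi ↦ (Nat.le_succ_iff.mp hi).elim (hlow i) fun hi ↦ hi ▸ htop

end HilbertSum

theorem eq_iterate_cumulativeSum_of_moduleLength {R : Type*} [CommRing R] {I : Ideal R} {n : ℕ}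
    {H₀ H : ℕ → ℕ} (hH₀ : ∀ m, moduleLength R (R ⧸ I ^ (m + 1)) = (H₀ m : ℕ∞))
    (hH : ∀ m, moduleLength (MvPowerSeries (Fin n) R)
      (MvPowerSeries (Fin n) R ⧸ I.comap MvPowerSeries.constantCoeff ^ (m + 1)) = (H m : ℕ∞)) :
    H = cumulativeSum^[n] H₀ := by
  simp only [← coe_length_eq_moduleLength, WithBot.coe_inj] at hH₀ hH
  have h := length_quotient_comap_constantCoeff_pow I n
  simp only [hH₀, hH] at h
  exact Nat.cast_injective.comp_left
    (h.trans (map_iterate_cumulativeSum (Nat.castAddMonoidHom ℕ∞) n H₀).symm)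

theorem power_series_extension_general {R : Type*} [CommRing R] {I₀ Q₀ : Ideal R} (hQ₀I₀ : Q₀ ≤ I₀)
    (hred₀ : ∃ r : ℕ, I₀ ^ (r + 1) = Q₀ * I₀ ^ r) {n : ℕ}
    {I Q : Ideal (MvPowerSeries (Fin n) R)}
    (hI : I = Ideal.map (algebraMap R (MvPowerSeries (Fin n) R)) I₀ ⊔
      Ideal.span (Set.range MvPowerSeries.X))
    (hQ : Q = Ideal.map (algebraMap R (MvPowerSeries (Fin n) R)) Q₀ ⊔
      Ideal.span (Set.range MvPowerSeries.X))
    {H₀ H : ℕ → ℕ} (hH₀ : ∀ m, moduleLength R (R ⧸ I₀ ^ (m + 1)) = (H₀ m : ℕ∞))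
    (hH : ∀ m, moduleLength (MvPowerSeries (Fin n) R)
      (MvPowerSeries (Fin n) R ⧸ I ^ (m + 1)) = (H m : ℕ∞))
    {d₀ : ℕ} {e₀ e : ℕ → ℤ} (hHS₀ : ∀ᶠ m in atTop, (H₀ m : ℤ) = hilbertSum e₀ d₀ m)
    (hHS : ∀ᶠ m in atTop, (H m : ℤ) = hilbertSum e (d₀ + n) m) :
    (∃ r : ℕ, I ^ (r + 1) = Q * I ^ r) ∧
    (∀ i ≤ d₀, e i = e₀ i) ∧
    Nonempty
      ((RestrictScalars R (MvPowerSeries (Fin n) R)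
          (↥(I ^ 2) ⧸ Submodule.comap (I ^ 2).subtype (Q * I))) ≃ₗ[R]
        (↥(I₀ ^ 2) ⧸ Submodule.comap (I₀ ^ 2).subtype (Q₀ * I₀))) ∧
    moduleLength (MvPowerSeries (Fin n) R)
        (↥(I ^ 2) ⧸ Submodule.comap (I ^ 2).subtype (Q * I)) =
      moduleLength R (↥(I₀ ^ 2) ⧸ Submodule.comap (I₀ ^ 2).subtype (Q₀ * I₀)) := by
  have hπ := mvPowerSeries_constantCoeff_leftInverse (R := R) (Fin n)
  have : RingHomSurjective (MvPowerSeries.constantCoeff (σ := Fin n) (R := R)) := ⟨hπ.surjective⟩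
  rw [← mvPowerSeries_comap_constantCoeff] at hI hQ
  subst hI hQ
  obtain ⟨r, hr⟩ := hred₀
  have hbij := exists_bijective_comap_pow_quotient hπ Q₀ I₀ 1
  rw [pow_one, pow_one] at hbij
  obtain ⟨F, hF⟩ := hbij
  refine ⟨⟨r, comap_pow_succ_eq_of_pow_succ_eq hπ hQ₀I₀ hr⟩, ?_,
    nonempty_restrictScalars_linearEquiv_of_bijective hπ F hF, moduleLength_eq_of_bijective F hF⟩
  rw [eq_iterate_cumulativeSum_of_moduleLength hH₀ hH] at hHS
  have hHS' : cumulativeSum^[n] (fun m ↦ (H₀ m : ℤ)) =ᶠ[atTop] hilbertSum e (d₀ + n) :=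
    (map_iterate_cumulativeSum (Nat.castAddMonoidHom ℤ) n H₀).symm.eventuallyEq.trans hHS
  exact eq_of_hilbertSum_eventuallyEq
    ((eventuallyEq_hilbertSum_of_iterate_cumulativeSum n hHS').symm.trans hHS₀)

/-- Passing from `(A₀, I₀, Q₀)` to the power series ring
`A = A₀[[X₁,…,X_n]]` with `I = I₀A + (X)A`, `Q = Q₀A + (X)A`:  `Q` is a reduction of
`I`, the first two Hilbert coefficients are unchanged, and `I²/QI ≅ I₀²/Q₀I₀`, so in
particular the lengths agree.  `H₀ n = ℓ_{A₀}(A₀/I₀^{n+1})` and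
`H n = ℓ_A(A/I^{n+1})`, with Hilbert coefficients `e⁰`, `e` given by the respective
Hilbert–Samuel polynomials (of dimensions `d₀` and `d₀ + n`). -/
theorem power_series_extension (A₀ : Type*) [CommRing A₀] [IsLocalRing A₀]
    [IsNoetherianRing A₀] (d₀ : ℕ) (hd₀ : 0 < d₀) (hCM : IsCohenMacaulayLocal A₀ d₀)
    (I₀ Q₀ : Ideal A₀) (hI₀ : IsPrimaryToMax A₀ I₀)
    (c : ℕ) (a : Fin c → A₀) (hQ₀ : Q₀ = Ideal.span (Set.range a)) (hQ₀I₀ : Q₀ ≤ I₀)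
    (hred₀ : ∃ r : ℕ, I₀ ^ (r + 1) = Q₀ * I₀ ^ r)
    (n : ℕ)
    (I Q : Ideal (MvPowerSeries (Fin n) A₀))
    (hI : I = Ideal.map (algebraMap A₀ (MvPowerSeries (Fin n) A₀)) I₀ ⊔
      Ideal.span (Set.range (MvPowerSeries.X : Fin n → MvPowerSeries (Fin n) A₀)))
    (hQ : Q = Ideal.map (algebraMap A₀ (MvPowerSeries (Fin n) A₀)) Q₀ ⊔
      Ideal.span (Set.range (MvPowerSeries.X : Fin n → MvPowerSeries (Fin n) A₀)))
    (H₀ H : ℕ → ℕ)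
    (hH₀ : ∀ m : ℕ, moduleLength A₀ (A₀ ⧸ I₀ ^ (m + 1)) = (H₀ m : ℕ∞))
    (hH : ∀ m : ℕ,
      moduleLength (MvPowerSeries (Fin n) A₀)
        (MvPowerSeries (Fin n) A₀ ⧸ I ^ (m + 1)) = (H m : ℕ∞))
    (e₀ e : ℕ → ℤ) (N : ℕ)
    (hHS₀ : ∀ m ≥ N, (H₀ m : ℤ) =
      ∑ i ∈ Finset.range (d₀ + 1),
        (-1) ^ i * e₀ i * ((m + d₀ - i).choose (d₀ - i) : ℤ))
    (hHS : ∀ m ≥ N, (H m : ℤ) =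
      ∑ i ∈ Finset.range (d₀ + n + 1),
        (-1) ^ i * e i * ((m + (d₀ + n) - i).choose (d₀ + n - i) : ℤ)) :
    (∃ r : ℕ, I ^ (r + 1) = Q * I ^ r) ∧
    e 0 = e₀ 0 ∧ e 1 = e₀ 1 ∧
    Nonempty
      ((RestrictScalars A₀ (MvPowerSeries (Fin n) A₀)
          (↥(I ^ 2) ⧸ Submodule.comap (I ^ 2).subtype (Q * I))) ≃ₗ[A₀]
        (↥(I₀ ^ 2) ⧸ Submodule.comap (I₀ ^ 2).subtype (Q₀ * I₀))) ∧
    moduleLength (MvPowerSeries (Fin n) A₀)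
        (↥(I ^ 2) ⧸ Submodule.comap (I ^ 2).subtype (Q * I)) =
      moduleLength A₀ (↥(I₀ ^ 2) ⧸ Submodule.comap (I₀ ^ 2).subtype (Q₀ * I₀)) := by
  have h := power_series_extension_general hQ₀I₀ hred₀ hI hQ hH₀ hH
    (eventually_atTop.mpr ⟨N, hHS₀⟩) (eventually_atTop.mpr ⟨N, hHS⟩)
  exact ⟨h.1, h.2.1 0 d₀.zero_le, h.2.1 1 hd₀, h.2.2⟩
end
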